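/- arXiv:quant-ph/0412157 — 3 statements merged into one kernel-verified Lean document; each statement's English description precedes it below -/
import Mathlib

section
/- Let ρ and σ be density operators on a finite-dimensional Hilbert space with supp ρ ≤ supp σ, and for ε ∈ (0,1) define β_{ε,n} = min{ log tr(σ^{⊗n} q) : q an orthogonal projection on H^{⊗n} with tr(ρ^{⊗n} q) ≥ 1 − ε }. Then lim_{n→∞} (1/n) β_{ε,n} = −S(ρ,σ), where S(ρ,σ) = tr ρ(log ρ − log σ) is the quantum relative entropy (base-2 logarithm). (Quantum Stein's lemma.) -/
open Filter
open scoped ComplexOrder Classical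

/-- `n`-fold tensor power of a `d×d` matrix, realized on the index set `Fin n → Fin d`. -/
noncomputable def tpow {d : ℕ} (ρ : Matrix (Fin d) (Fin d) ℂ) (n : ℕ) :
    Matrix (Fin n → Fin d) (Fin n → Fin d) ℂ :=
  Matrix.of fun x y => ∏ i, ρ (x i) (y i)

/-- Base-2 functional calculus logarithm of a Hermitian matrix, with the convention
`log 0 = 0` on the kernel (and junk value `0` on non-Hermitian matrices). -/
noncomputable def matLog2 {m : Type*} [Fintype m] [DecidableEq m]
    (ρ : Matrix m m ℂ) : Matrix m m ℂ :=
  if h : ρ.IsHermitian then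
    (h.eigenvectorUnitary : Matrix m m ℂ) *
      Matrix.diagonal (fun i => (Real.logb 2 (h.eigenvalues i) : ℂ)) *
      (star (h.eigenvectorUnitary : Matrix m m ℂ))
  else 0

/-- Quantum relative entropy `S(ρ,σ) = tr ρ (log ρ − log σ)` (base 2); this real-valued
formula is meaningful when `supp ρ ≤ supp σ`. -/
noncomputable def qRelEnt {m : Type*} [Fintype m] [DecidableEq m]
    (ρ σ : Matrix m m ℂ) : ℝ :=
  ((ρ * (matLog2 ρ - matLog2 σ)).trace).re

/-- Support condition `supp ρ ≤ supp σ` (for PSD matrices: `ker σ ⊆ ker ρ`). -/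
def SuppLe {m : Type*} [Fintype m] (ρ σ : Matrix m m ℂ) : Prop :=
  ∀ v, σ.mulVec v = 0 → ρ.mulVec v = 0

/-- Quantum relative entropy with value `⊤` when `supp ρ ≤ supp σ` fails. -/
noncomputable def qRelEntE {m : Type*} [Fintype m] [DecidableEq m]
    (ρ σ : Matrix m m ℂ) : EReal :=
  if SuppLe ρ σ then ((qRelEnt ρ σ : ℝ) : EReal) else ⊤

/-- Von Neumann entropy (base 2). -/
noncomputable def vNent {m : Type*} [Fintype m] [DecidableEq m]
    (ρ : Matrix m m ℂ) : ℝ :=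
  if h : ρ.IsHermitian then -∑ i, (h.eigenvalues i) * Real.logb 2 (h.eigenvalues i) else 0

/-- Density operator. -/
def IsDensity {m : Type*} [Fintype m] (ρ : Matrix m m ℂ) : Prop :=
  ρ.PosSemidef ∧ ρ.trace = 1

/-- Orthogonal projection. -/
def IsProjn {m : Type*} [Fintype m] (p : Matrix m m ℂ) : Prop :=
  p.IsHermitian ∧ p * p = p

/-- Base-2 logarithm with value `⊥` at nonpositive reals. -/
noncomputable def elog2 (t : ℝ) : EReal := if t ≤ 0 then ⊥ else ((Real.logb 2 t : ℝ) : EReal)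

/-!
Write `ρ^{⊗n} = M * Mᴴ`, so that `tr(ρ^{⊗n} q) = ‖q M‖²` in the Frobenius norm for every
projection `q`. The weak law of large numbers for the diagonal of `ρ` in an eigenbasis of `ρ`,
respectively of `σ`, yields spectral projections `P` of `ρ^{⊗n}` and `Q` of `σ^{⊗n}` with
eigenvalues `2 ^ (n (tr ρ log ρ ± δ))` and `2 ^ (n (tr ρ log σ ± δ))` such that `P M` and `Q M` are
close to `M`. Closeness in norm survives the product `Q P`, although `P` and `Q` need not commute.

For the upper bound take for `q` the range projection of `Q P`: its rank is at most
`rank P ≤ 2 ^ (-n (tr ρ log ρ - δ))`, and it lies below `Q`, where `σ^{⊗n}` is at most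
`2 ^ (n (tr ρ log σ + δ))`. For the lower bound, `‖q M‖` is close to `‖q Q P M‖`, and
`‖q Q P M‖² ≤ 2 ^ (n (tr ρ log ρ + δ)) tr(Q q)` while `2 ^ (n (tr ρ log σ - δ)) Q ≤ σ^{⊗n}`.
-/

section Trace

open scoped MatrixOrder

variable {ι : Type*} [Fintype ι]

lemma isProjn_iff_isStarProjection {P : Matrix ι ι ℂ} : IsProjn P ↔ IsStarProjection P :=
  ⟨fun h => ⟨h.2, h.1⟩, fun h => ⟨h.isSelfAdjoint, h.isIdempotentElem⟩⟩

lemma re_trace_mul_nonneg {A B : Matrix ι ι ℂ} (hA : 0 ≤ A) (hB : 0 ≤ B) :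
    0 ≤ ((A * B).trace).re := by
  obtain ⟨C, rfl⟩ := CStarAlgebra.nonneg_iff_eq_star_mul_self.mp hB
  rw [← mul_assoc, Matrix.trace_mul_comm, ← mul_assoc]
  exact (Complex.nonneg_iff.1
    (Matrix.nonneg_iff_posSemidef.1 (star_right_conjugate_nonneg hA C)).trace_nonneg).1

lemma re_trace_mul_le_re_trace_mul {A B M : Matrix ι ι ℂ} (hAB : A ≤ B) (hM : 0 ≤ M) :
    ((A * M).trace).re ≤ ((B * M).trace).re := by
  rw [← sub_nonneg, ← Complex.sub_re, ← Matrix.trace_sub, ← sub_mul]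
  exact re_trace_mul_nonneg (sub_nonneg.2 hAB) hM

lemma re_trace_le_re_trace {A B : Matrix ι ι ℂ} (hAB : A ≤ B) : A.trace.re ≤ B.trace.re := by
  simpa only [mul_one] using re_trace_mul_le_re_trace_mul hAB (M := 1) zero_le_one

lemma trace_eq_rank_of_isIdempotentElem {K : Type*} [Field K] {P : Matrix ι ι K}
    (hP : IsIdempotentElem P) : P.trace = P.rank := by
  have hproj := LinearMap.IsIdempotentElem.isProj_range (Matrix.toLin' P)
    (hP.map (Matrix.toLinAlgEquiv' (R := K)))
  rw [← Matrix.trace_toLin'_eq, hproj.trace, Matrix.rank, Matrix.toLin'_apply']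

lemma exists_rangeProjection {κ : Type*} [Fintype κ] (A : Matrix ι κ ℂ) :
    ∃ (q : Matrix ι ι ℂ) (B : Matrix κ ι ℂ), IsStarProjection q ∧ q * A = A ∧ q = A * B := by
  set H := A * A.conjTranspose
  have hH : IsSelfAdjoint H := Matrix.isHermitian_mul_conjTranspose_self A
  have hcont (f : ℝ → ℝ) : ContinuousOn f (spectrum ℝ H) :=
    Matrix.finite_real_spectrum.continuousOn f
  -- `x * x⁻¹` is the indicator function of `x ≠ 0`, since `0⁻¹ = 0`.
  set q := cfc (fun x : ℝ => x * x⁻¹) H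
  have hqq : q * q = q := by
    rw [← cfc_mul _ _ H (hcont _) (hcont _)]
    exact cfc_congr fun x _ => by by_cases hx : x = 0 <;> simp [hx]
  have hqH : q * H = H := by
    conv_lhs => rw [← cfc_id' ℝ H hH, ← cfc_mul _ _ H (hcont _) (hcont _)]
    simp only [mul_inv_mul_cancel, cfc_id' ℝ H hH]
  have hqB : q = H * cfc (fun x : ℝ => x⁻¹) H := by
    exact (cfc_mul (fun x : ℝ => x) _ H (hcont _) (hcont _)).trans (by rw [cfc_id' ℝ H hH])
  refine ⟨q, A.conjTranspose * cfc (fun x : ℝ => x⁻¹) H, ⟨hqq, cfc_predicate _ _⟩, ?_, ?_⟩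
  · have : (q - 1) * A = 0 := by
      rw [← Matrix.mul_self_mul_conjTranspose_eq_zero, Matrix.sub_mul, Matrix.one_mul, hqH,
        sub_self]
    rwa [Matrix.sub_mul, Matrix.one_mul, sub_eq_zero] at this
  · rw [hqB, Matrix.mul_assoc]

end Trace

section FrobeniusNorm

open scoped MatrixOrder Matrix.Norms.Frobenius

variable {ι κ : Type*} [Fintype ι] [Fintype κ]

lemma frobenius_norm_sq (M : Matrix ι κ ℂ) : ‖M‖ ^ 2 = ((M * M.conjTranspose).trace).re := by
  rw [Matrix.frobenius_norm_def, ← Real.sqrt_eq_rpow, Real.sq_sqrt (by positivity)]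
  simp only [Matrix.trace, Matrix.diag_apply, Matrix.mul_apply, Matrix.conjTranspose_apply,
    Complex.re_sum, Complex.star_def, Complex.mul_conj, Complex.ofReal_re,
    Complex.normSq_eq_norm_sq, Real.rpow_two]

lemma norm_projection_mul_sq {P : Matrix ι ι ℂ} (hP : IsStarProjection P) (M : Matrix ι κ ℂ) :
    ‖P * M‖ ^ 2 = ((M * M.conjTranspose * P).trace).re := by
  have hPH : P.conjTranspose = P := hP.isSelfAdjoint.star_eq
  rw [frobenius_norm_sq, Matrix.conjTranspose_mul, hPH, ← Matrix.mul_assoc, Matrix.trace_mul_comm,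
    Matrix.mul_assoc, ← Matrix.mul_assoc P P, hP.isIdempotentElem.eq, Matrix.trace_mul_comm]

lemma norm_projection_mul_le {P : Matrix ι ι ℂ} (hP : IsStarProjection P) (M : Matrix ι κ ℂ) :
    ‖P * M‖ ≤ ‖M‖ := by
  refine le_of_sq_le_sq ?_ (norm_nonneg M)
  rw [norm_projection_mul_sq hP, frobenius_norm_sq, Matrix.trace_mul_comm]
  simpa only [one_mul] using re_trace_mul_le_re_trace_mul hP.le_one
    (Matrix.posSemidef_self_mul_conjTranspose M).nonneg

lemma norm_sub_projection_mul_sq {P : Matrix ι ι ℂ} (hP : IsStarProjection P)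
    (M : Matrix ι κ ℂ) :
    ‖M - P * M‖ ^ 2 = ‖M‖ ^ 2 - ((M * M.conjTranspose * P).trace).re := by
  have hcompl : M - P * M = (1 - P) * M := by rw [Matrix.sub_mul, Matrix.one_mul]
  rw [hcompl, norm_projection_mul_sq hP.one_sub, mul_sub, mul_one, Matrix.trace_sub,
    Complex.sub_re, frobenius_norm_sq]

lemma norm_projection_mul_le_add {q P Q : Matrix ι ι ℂ} (hq : IsStarProjection q)
    (hQ : IsStarProjection Q) (M : Matrix ι κ ℂ) :
    ‖q * M‖ ≤ ‖q * (Q * P) * M‖ + ‖M - P * M‖ + ‖M - Q * M‖ := by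
  have hsplit : q * M = q * (Q * P) * M + q * (Q * (M - P * M)) + q * (M - Q * M) := by
    simp only [Matrix.mul_sub, Matrix.mul_assoc]
    abel
  calc ‖q * M‖ ≤ ‖q * (Q * P) * M‖ + ‖q * (Q * (M - P * M))‖ + ‖q * (M - Q * M)‖ := by
        conv_lhs => rw [hsplit]
        exact norm_add₃_le
    _ ≤ _ := by
        gcongr
        · exact (norm_projection_mul_le hq _).trans (norm_projection_mul_le hQ _)
        · exact norm_projection_mul_le hq _

lemma norm_sub_projection_mul_le_add {q P Q : Matrix ι ι ℂ} (hq : IsStarProjection q)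
    (hQ : IsStarProjection Q) (hqQP : q * (Q * P) = Q * P) (M : Matrix ι κ ℂ) :
    ‖M - q * M‖ ≤ ‖M - P * M‖ + ‖M - Q * M‖ := by
  simpa [Matrix.sub_mul, hqQP] using norm_projection_mul_le_add (P := P) hq.one_sub hQ M

end FrobeniusNorm

section SpectralWindow

open scoped MatrixOrder Matrix.Norms.Frobenius

variable {ι κ : Type*} [Fintype ι] [Fintype κ]

/-- `P` is an orthogonal projection on whose range `A` lies between `a` and `b`, as a spectral
projection of `A ≥ 0` for the interval `[a, b]` does: the form in which the one-shot bounds use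
typical projections. The lower bound is imposed on `A` itself, not on its compression to `P`. -/
structure IsSpectralWindow (A P : Matrix ι ι ℂ) (a b : ℝ) : Prop where
  isStarProjection : IsStarProjection P
  smul_le : a • P ≤ A
  compression_le : P * A * P ≤ b • P

lemma re_trace_smul_mul (c : ℝ) (A B : Matrix ι ι ℂ) :
    ((c • A * B).trace).re = c * ((A * B).trace).re := by
  simp

variable {R : Matrix ι κ ℂ} {σ P Q q : Matrix ι ι ℂ} {a b a' b' : ℝ}

lemma IsSpectralWindow.mul_norm_sq_le (hP : IsSpectralWindow (R * R.conjTranspose) P a b)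
    (hQ : IsSpectralWindow σ Q a' b') (hq : IsStarProjection q) (ha' : 0 ≤ a') (hb : 0 ≤ b) :
    a' * ‖q * (Q * P) * R‖ ^ 2 ≤ b * ((σ * q).trace).re := by
  have hQqQ : 0 ≤ Q * q * Q := hQ.isStarProjection.isSelfAdjoint.conjugate_nonneg hq.nonneg
  have hnorm : ‖q * (Q * P) * R‖ ^ 2 ≤ b * ((Q * q).trace).re := calc
    ‖q * (Q * P) * R‖ ^ 2 = ((P * (R * R.conjTranspose) * P * (Q * q * Q)).trace).re := by
      have hPH : P.conjTranspose = P := hP.isStarProjection.isSelfAdjoint.star_eq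
      have hQH : Q.conjTranspose = Q := hQ.isStarProjection.isSelfAdjoint.star_eq
      rw [Matrix.mul_assoc, norm_projection_mul_sq hq, Matrix.conjTranspose_mul,
        Matrix.conjTranspose_mul, hPH, hQH]
      simp only [Matrix.mul_assoc]
      rw [Matrix.trace_mul_comm Q]
      simp only [Matrix.mul_assoc]
    _ ≤ ((b • P * (Q * q * Q)).trace).re := re_trace_mul_le_re_trace_mul hP.compression_le hQqQ
    _ = b * ((P * (Q * q * Q)).trace).re := re_trace_smul_mul b _ _
    _ ≤ b * ((1 * (Q * q * Q)).trace).re := mul_le_mul_of_nonneg_left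
      (re_trace_mul_le_re_trace_mul hP.isStarProjection.le_one hQqQ) hb
    _ = b * ((Q * q).trace).re := by
      rw [one_mul, Matrix.trace_mul_comm, ← mul_assoc, hQ.isStarProjection.isIdempotentElem.eq]
  calc a' * ‖q * (Q * P) * R‖ ^ 2 ≤ b * (a' * ((Q * q).trace).re) := by
        rw [mul_left_comm]
        exact mul_le_mul_of_nonneg_left hnorm ha'
    _ = b * ((a' • Q * q).trace).re := by rw [re_trace_smul_mul]
    _ ≤ b * ((σ * q).trace).re :=
        mul_le_mul_of_nonneg_left (re_trace_mul_le_re_trace_mul hQ.smul_le hq.nonneg) hb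

lemma IsSpectralWindow.exists_projection {ρ : Matrix ι ι ℂ} (hP : IsSpectralWindow ρ P a b)
    (hQ : IsSpectralWindow σ Q a' b') (ha : 0 ≤ a) (hb' : 0 ≤ b') :
    ∃ q : Matrix ι ι ℂ, IsStarProjection q ∧ q * (Q * P) = Q * P ∧
      a * ((σ * q).trace).re ≤ b' * ρ.trace.re := by
  obtain ⟨q, B, hq, hqQP, hqB⟩ := exists_rangeProjection (Q * P)
  have hQq : Q * q = q := by
    rw [hqB, ← mul_assoc, ← mul_assoc, hQ.isStarProjection.isIdempotentElem.eq]
  have hqQ : q * Q = q := by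
    simpa [hq.isSelfAdjoint.star_eq, hQ.isStarProjection.isSelfAdjoint.star_eq]
      using congrArg star hQq
  have hσ : ((σ * q).trace).re ≤ b' * q.trace.re := calc
    ((σ * q).trace).re = ((Q * σ * Q * q).trace).re := by
      rw [mul_assoc, mul_assoc, hQq, Matrix.trace_mul_comm Q, mul_assoc, hqQ]
    _ ≤ ((b' • Q * q).trace).re := re_trace_mul_le_re_trace_mul hQ.compression_le hq.nonneg
    _ = b' * q.trace.re := by rw [re_trace_smul_mul, hQq]
  have hrank : q.trace.re ≤ P.trace.re := by
    rw [trace_eq_rank_of_isIdempotentElem hq.isIdempotentElem,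
      trace_eq_rank_of_isIdempotentElem hP.isStarProjection.isIdempotentElem, hqB]
    exact_mod_cast (Matrix.rank_mul_le_left _ _).trans (Matrix.rank_mul_le_right _ _)
  refine ⟨q, hq, hqQP, ?_⟩
  calc a * ((σ * q).trace).re ≤ a * (b' * P.trace.re) :=
        mul_le_mul_of_nonneg_left (hσ.trans (mul_le_mul_of_nonneg_left hrank hb')) ha
    _ = b' * (a • P).trace.re := by
        rw [Matrix.trace_smul, Complex.smul_re, smul_eq_mul, mul_left_comm]
    _ ≤ b' * ρ.trace.re := mul_le_mul_of_nonneg_left (re_trace_le_re_trace hP.smul_le) hb'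

lemma isSpectralWindow_diagonal_indicator [DecidableEq ι] {w : ι → ℝ} (hw : ∀ i, 0 ≤ w i)
    {T : Set ι} (hT : ∀ i ∈ T, w i ∈ Set.Icc a b) :
    IsSpectralWindow (Matrix.diagonal fun i => (w i : ℂ)) (Matrix.diagonal (T.indicator 1))
      a b := by
  have hdiag {v : ι → ℂ} (hv : 0 ≤ v) : 0 ≤ Matrix.diagonal v :=
    Matrix.nonneg_iff_posSemidef.2 (.diagonal hv)
  refine ⟨⟨?_, ?_⟩, ?_, ?_⟩
  · rw [IsIdempotentElem, Matrix.diagonal_mul_diagonal]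
    congr 1 with i
    by_cases hi : i ∈ T <;> simp [hi]
  · rw [IsSelfAdjoint, Matrix.star_eq_conjTranspose, Matrix.diagonal_conjTranspose]
    congr 1 with i
    by_cases hi : i ∈ T <;> simp [hi]
  · rw [← sub_nonneg, ← Matrix.diagonal_smul, Matrix.diagonal_sub]
    refine hdiag fun i => ?_
    by_cases hi : i ∈ T <;> simp [hi, hw i, (hT i _).1]
  · rw [← sub_nonneg, ← Matrix.diagonal_smul, Matrix.diagonal_mul_diagonal,
      Matrix.diagonal_mul_diagonal, Matrix.diagonal_sub]
    refine hdiag fun i => ?_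
    by_cases hi : i ∈ T <;> simp [hi, (hT i _).2]

lemma IsSpectralWindow.map {A P : Matrix ι ι ℂ} (h : IsSpectralWindow A P a b)
    (Φ : Matrix ι ι ℂ ≃⋆ₐ[ℂ] Matrix ι ι ℂ) : IsSpectralWindow (Φ A) (Φ P) a b where
  isStarProjection := h.isStarProjection.map Φ
  smul_le := by
    have := OrderHomClass.mono Φ h.smul_le
    simpa [← Complex.coe_smul] using this
  compression_le := by
    have := OrderHomClass.mono Φ h.compression_le
    simpa [← Complex.coe_smul] using this

end SpectralWindow

section TypicalSet

open MeasureTheory ProbabilityTheory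

variable {α : Type*}

lemma measureReal_pi_le_abs_sum_sub_le [MeasurableSpace α] (μ : Measure α)
    [IsProbabilityMeasure μ] {X : α → ℝ} (hX : MemLp X 2 μ) {δ : ℝ} (hδ : 0 < δ) {n : ℕ}
    (hn : 0 < n) :
    (Measure.pi fun _ : Fin n => μ).real {x | n * δ ≤ |∑ i, X (x i) - n * ∫ a, X a ∂μ|} ≤
      Var[X; μ] / δ ^ 2 / n := by
  have hn' : (0 : ℝ) < n := Nat.cast_pos.2 hn
  set ν := Measure.pi fun _ : Fin n => μ
  set S : (Fin n → α) → ℝ := ∑ i, fun x => X (x i)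
  have hcoord (i : Fin n) : MemLp (fun x : Fin n → α => X (x i)) 2 ν :=
    hX.comp_measurePreserving (measurePreserving_eval _ i)
  have hmean : ∫ x, S x ∂ν = n * ∫ a, X a ∂μ := by
    simp only [S, Finset.sum_apply]
    rw [integral_finsetSum _ fun i _ => (hcoord i).integrable one_le_two]
    simp [ν, integral_comp_eval (μ := fun _ : Fin n => μ) hX.aestronglyMeasurable]
  have hvar : Var[S; ν] = n * Var[X; μ] := by
    simp [S, ν, variance_sum_pi (μ := fun _ : Fin n => μ) (X := fun _ => X) fun _ => hX]
  have hchebyshev := ENNReal.toReal_le_of_le_ofReal (div_nonneg (variance_nonneg S ν) (sq_nonneg _))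
    (meas_ge_le_variance_div_sq (memLp_finsetSum' _ fun i _ => hcoord i) (mul_pos hn' hδ))
  rw [hmean, hvar] at hchebyshev
  simp only [Finset.sum_apply] at hchebyshev
  exact hchebyshev.trans_eq (by field_simp)

lemma tendsto_measureReal_pi_abs_sum_sub_le [MeasurableSpace α] (μ : Measure α)
    [IsProbabilityMeasure μ] {X : α → ℝ} (hX : MemLp X 2 μ) {δ : ℝ} (hδ : 0 < δ) :
    Tendsto (fun n : ℕ => (Measure.pi fun _ : Fin n => μ).real
      {x | |∑ i, X (x i) - n * ∫ a, X a ∂μ| ≤ n * δ}) atTop (nhds 1) := by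
  have hlim : Tendsto (fun n : ℕ => 1 - Var[X; μ] / δ ^ 2 / n) atTop (nhds 1) := by
    simpa using (tendsto_const_div_atTop_nhds_zero_nat (Var[X; μ] / δ ^ 2)).const_sub 1
  refine tendsto_of_tendsto_of_tendsto_of_le_of_le' hlim tendsto_const_nhds ?_
    (Eventually.of_forall fun n => measureReal_le_one)
  filter_upwards [eventually_gt_atTop 0] with n hn
  set ν := Measure.pi fun _ : Fin n => μ
  have hcover : 1 ≤ ν.real {x | |∑ i, X (x i) - n * ∫ a, X a ∂μ| ≤ n * δ} +
      ν.real {x | n * δ ≤ |∑ i, X (x i) - n * ∫ a, X a ∂μ|} := by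
    rw [← probReal_univ (μ := ν)]
    refine (measureReal_mono fun x _ => ?_).trans (measureReal_union_le _ _)
    exact le_total (|∑ i, X (x i) - n * ∫ a, X a ∂μ|) (n * δ)
  linarith [measureReal_pi_le_abs_sum_sub_le μ hX hδ hn]

/-- The sequences of length `n` that are typical for the weight `a` with exponent `E`: the
product of their weights is `2 ^ (n * E)` up to a factor `2 ^ (n * δ)`. -/
def typicalSet (a : α → ℝ) (E δ : ℝ) (n : ℕ) : Set (Fin n → α) :=
  {x | ∏ i, a (x i) ∈ Set.Icc ((2 : ℝ) ^ (n * (E - δ))) ((2 : ℝ) ^ (n * (E + δ)))}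

lemma mem_typicalSet_of_abs_sum_logb_sub_le {a : α → ℝ} {E δ : ℝ} {n : ℕ} {x : Fin n → α}
    (ha : ∀ i, 0 < a (x i)) (hx : |∑ i, Real.logb 2 (a (x i)) - n * E| ≤ n * δ) :
    x ∈ typicalSet a E δ n := by
  have hprod : ∏ i, a (x i) = (2 : ℝ) ^ ∑ i, Real.logb 2 (a (x i)) := by
    rw [← Real.logb_prod _ _ fun i _ => (ha i).ne', Real.rpow_logb two_pos (by norm_num)
      (Finset.prod_pos fun i _ => ha i)]
  rw [abs_le] at hx
  rw [typicalSet, Set.mem_ofPred_eq, hprod]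
  constructor <;> exact Real.rpow_le_rpow_of_exponent_le one_le_two (by linarith)

lemma tendsto_measureReal_pi_typicalSet [MeasurableSpace α] (μ : Measure α)
    [IsProbabilityMeasure μ] {a : α → ℝ} (ha : ∀ᵐ x ∂μ, 0 < a x)
    (hL2 : MemLp (fun x => Real.logb 2 (a x)) 2 μ) {δ : ℝ} (hδ : 0 < δ) :
    Tendsto (fun n : ℕ => (Measure.pi fun _ : Fin n => μ).real
      (typicalSet a (∫ x, Real.logb 2 (a x) ∂μ) δ n)) atTop (nhds 1) := by
  refine tendsto_of_tendsto_of_tendsto_of_le_of_le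
    (tendsto_measureReal_pi_abs_sum_sub_le μ hL2 hδ) tendsto_const_nhds
    (fun n => ?_) fun n => measureReal_le_one
  have hpos : ∀ᵐ x ∂(Measure.pi fun _ : Fin n => μ), ∀ i, 0 < a (x i) :=
    ae_all_iff.2 fun i => (measurePreserving_eval (fun _ => μ) i).quasiMeasurePreserving.ae ha
  refine ENNReal.toReal_mono (measure_ne_top _ _) (measure_mono_ae ?_)
  filter_upwards [hpos] with x hx using mem_typicalSet_of_abs_sum_logb_sub_le hx

lemma tendsto_sum_typicalSet [Fintype α] {p a : α → ℝ} (hp : ∀ i, 0 ≤ p i) (hp1 : ∑ i, p i = 1)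
    (ha : ∀ i, 0 ≤ a i) (hpa : ∀ i, a i = 0 → p i = 0) {δ : ℝ} (hδ : 0 < δ) :
    Tendsto (fun n : ℕ => ∑ x : Fin n → α,
      (typicalSet a (∑ i, p i * Real.logb 2 (a i)) δ n).indicator (fun x => ∏ i, p (x i)) x)
      atTop (nhds 1) := by
  let _ : MeasurableSpace α := ⊤
  have hsum : ∑ i, ENNReal.ofReal (p i) = 1 := by
    rw [← ENNReal.ofReal_sum_of_nonneg fun i _ => hp i, hp1, ENNReal.ofReal_one]
  set μ := (PMF.ofFintype (fun i => ENNReal.ofReal (p i)) hsum).toMeasure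
  have hμ (i : α) : μ.real {i} = p i := by
    rw [measureReal_def, PMF.toMeasure_apply_singleton _ _ (measurableSet_singleton i)]
    exact ENNReal.toReal_ofReal (hp i)
  have hpos : ∀ᵐ i ∂μ, 0 < a i := by
    refine (ae_iff_of_countable).2 fun i hi => (ha i).lt_of_ne' fun h => hi ?_
    rw [← measureReal_eq_zero_iff, hμ, hpa i h]
  have hmean : ∫ i, Real.logb 2 (a i) ∂μ = ∑ i, p i * Real.logb 2 (a i) := by
    simp only [integral_fintype (μ := μ) .of_finite, hμ, smul_eq_mul]
  have hmass (n : ℕ) (T : Set (Fin n → α)) : (Measure.pi fun _ : Fin n => μ).real T =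
      ∑ x : Fin n → α, T.indicator (fun x => ∏ i, p (x i)) x := by
    have hT : T = ↑(Finset.univ.filter (· ∈ T)) := by simp
    conv_lhs => rw [hT, ← sum_measureReal_singleton, Finset.sum_filter]
    refine Finset.sum_congr rfl fun x _ => ?_
    simp only [Set.indicator_apply, measureReal_def, Measure.pi_singleton, ENNReal.toReal_prod]
    simp only [← measureReal_def, hμ]
  simpa only [hmean, hmass] using tendsto_measureReal_pi_typicalSet μ hpos .of_discrete hδ

end TypicalSet

section TensorPower

variable {d : ℕ}

lemma tpow_mul (A B : Matrix (Fin d) (Fin d) ℂ) (n : ℕ) :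
    tpow (A * B) n = tpow A n * tpow B n := by
  ext x y
  simp only [tpow, Matrix.of_apply, Matrix.mul_apply, Fintype.prod_sum, Finset.prod_mul_distrib]

lemma tpow_conjTranspose (A : Matrix (Fin d) (Fin d) ℂ) (n : ℕ) :
    tpow A.conjTranspose n = (tpow A n).conjTranspose := by
  ext x y
  simp [tpow]

lemma tpow_diagonal (w : Fin d → ℂ) (n : ℕ) :
    tpow (Matrix.diagonal w) n = Matrix.diagonal fun x => ∏ i, w (x i) := by
  ext x y
  by_cases hxy : x = y
  · simp [hxy, tpow]
  · obtain ⟨i, hi⟩ := Function.ne_iff.1 hxy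
    rw [Matrix.diagonal_apply_ne _ hxy]
    exact Finset.prod_eq_zero (Finset.mem_univ i) (Matrix.diagonal_apply_ne _ hi)

lemma tpow_one (n : ℕ) : tpow (1 : Matrix (Fin d) (Fin d) ℂ) n = 1 := by
  simp only [← Matrix.diagonal_one, tpow_diagonal, Finset.prod_const_one]

lemma trace_tpow (A : Matrix (Fin d) (Fin d) ℂ) (n : ℕ) : (tpow A n).trace = A.trace ^ n := by
  simp only [Matrix.trace, Matrix.diag_apply, tpow, Matrix.of_apply, Fintype.sum_pow]

/-- The `n`-fold tensor power of a unitary. -/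
noncomputable def tpowUnitary (U : unitary (Matrix (Fin d) (Fin d) ℂ)) (n : ℕ) :
    unitary (Matrix (Fin n → Fin d) (Fin n → Fin d) ℂ) :=
  ⟨tpow U n, by
    rw [← Matrix.unitaryGroup, Matrix.mem_unitaryGroup_iff, Matrix.star_eq_conjTranspose,
      ← tpow_conjTranspose, ← tpow_mul, ← Matrix.star_eq_conjTranspose,
      Unitary.mul_star_self_of_mem U.2, tpow_one]⟩

lemma tpow_conjStarAlgAut (U : unitary (Matrix (Fin d) (Fin d) ℂ)) (A : Matrix (Fin d) (Fin d) ℂ)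
    (n : ℕ) :
    tpow (Unitary.conjStarAlgAut ℂ (Matrix (Fin d) (Fin d) ℂ) U A) n =
      Unitary.conjStarAlgAut ℂ (Matrix (Fin n → Fin d) (Fin n → Fin d) ℂ)
        (tpowUnitary U n) (tpow A n) := by
  simp only [Unitary.conjStarAlgAut_apply, tpow_mul, Matrix.star_eq_conjTranspose,
    tpow_conjTranspose, tpowUnitary]

end TensorPower

section TypicalProjection

section Conjugation

variable {ι : Type*} [Fintype ι] [DecidableEq ι]

lemma trace_conjStarAlgAut (U : unitary (Matrix ι ι ℂ)) (A : Matrix ι ι ℂ) :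
    (Unitary.conjStarAlgAut ℂ (Matrix ι ι ℂ) U A).trace = A.trace := by
  rw [Unitary.conjStarAlgAut_apply, Matrix.trace_mul_comm, ← mul_assoc,
    Unitary.coe_star_mul_self, one_mul]

lemma IsDensity.conjStarAlgAut {ρ : Matrix ι ι ℂ} (hρ : IsDensity ρ)
    (U : unitary (Matrix ι ι ℂ)) :
    IsDensity (Unitary.conjStarAlgAut ℂ (Matrix ι ι ℂ) U ρ) :=
  ⟨hρ.1.mul_mul_conjTranspose_same _, (trace_conjStarAlgAut U ρ).trans hρ.2⟩

lemma SuppLe.conjStarAlgAut {ρ σ : Matrix ι ι ℂ} (h : SuppLe ρ σ) (U : unitary (Matrix ι ι ℂ)) :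
    SuppLe (Unitary.conjStarAlgAut ℂ (Matrix ι ι ℂ) U ρ)
      (Unitary.conjStarAlgAut ℂ (Matrix ι ι ℂ) U σ) := by
  intro v hv
  have hσ : σ.mulVec ((star (U : Matrix ι ι ℂ)).mulVec v) = 0 := by
    simpa [Unitary.conjStarAlgAut_apply, ← mul_assoc]
      using congrArg (star (U : Matrix ι ι ℂ)).mulVec hv
  rw [Unitary.conjStarAlgAut_apply, mul_assoc, ← Matrix.mulVec_mulVec, ← Matrix.mulVec_mulVec,
    h _ hσ, Matrix.mulVec_zero]

lemma matLog2_eq_conjStarAlgAut {A : Matrix ι ι ℂ} (hA : A.IsHermitian) :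
    matLog2 A = Unitary.conjStarAlgAut ℂ (Matrix ι ι ℂ) hA.eigenvectorUnitary
      (Matrix.diagonal fun i => (Real.logb 2 (hA.eigenvalues i) : ℂ)) := by
  rw [matLog2, dif_pos hA, Unitary.conjStarAlgAut_apply]

end Conjugation

variable {d : ℕ} {ρ : Matrix (Fin d) (Fin d) ℂ} {δ : ℝ}

lemma exists_typicalProjection_diagonal (hρ : IsDensity ρ) {s : Fin d → ℝ} (hs : ∀ i, 0 ≤ s i)
    (hsupp : SuppLe ρ (Matrix.diagonal fun i => (s i : ℂ))) (hδ : 0 < δ) :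
    let E := ((ρ * Matrix.diagonal fun i => (Real.logb 2 (s i) : ℂ)).trace).re
    ∃ Q : ∀ n : ℕ, Matrix (Fin n → Fin d) (Fin n → Fin d) ℂ,
      (∀ n : ℕ, IsSpectralWindow (tpow (Matrix.diagonal fun i => (s i : ℂ)) n) (Q n)
        ((2 : ℝ) ^ (n * (E - δ))) ((2 : ℝ) ^ (n * (E + δ)))) ∧
      Tendsto (fun n => ((tpow ρ n * Q n).trace).re) atTop (nhds 1) := by
  intro E
  have hp (i : Fin d) : ρ i i = ((ρ i i).re : ℂ) :=
    Complex.ext rfl (Complex.nonneg_iff.1 hρ.1.diag_nonneg).2.symm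
  have hp0 (i : Fin d) : 0 ≤ (ρ i i).re := (Complex.nonneg_iff.1 hρ.1.diag_nonneg).1
  have hp1 : ∑ i, (ρ i i).re = 1 := by
    rw [← Complex.re_sum, ← Complex.one_re, ← hρ.2, Matrix.trace]
    rfl
  have hps (i : Fin d) (hi : s i = 0) : (ρ i i).re = 0 := by
    have := congrFun (hsupp (Pi.single i 1) (by simp [hi])) i
    simpa using congrArg Complex.re this
  have hE : E = ∑ i, (ρ i i).re * Real.logb 2 (s i) := by
    simp [E, Matrix.trace]
  refine ⟨fun n => Matrix.diagonal ((typicalSet s E δ n).indicator 1), fun n => ?_, ?_⟩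
  · rw [tpow_diagonal]
    simpa using isSpectralWindow_diagonal_indicator
      (w := fun x : Fin n → Fin d => ∏ i, s (x i)) (fun x => Finset.prod_nonneg fun i _ => hs _)
      (T := typicalSet s E δ n) fun x hx => hx
  · refine (tendsto_sum_typicalSet hp0 hp1 hs hps hδ).congr fun n => ?_
    rw [← hE, Matrix.trace, Complex.re_sum]
    refine Finset.sum_congr rfl fun x _ => ?_
    by_cases hx : x ∈ typicalSet s E δ n
    · simp only [Set.indicator_of_mem hx, Matrix.diag_apply, Matrix.mul_diagonal, tpow,
        Matrix.of_apply, Pi.one_apply, mul_one]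
      rw [Finset.prod_congr rfl fun i _ => hp (x i), ← Complex.ofReal_prod, Complex.ofReal_re]
    · simp [hx]

lemma exists_typicalProjection {σ : Matrix (Fin d) (Fin d) ℂ} (hρ : IsDensity ρ)
    (hσ : σ.PosSemidef) (hsupp : SuppLe ρ σ) (hδ : 0 < δ) :
    let E := ((ρ * matLog2 σ).trace).re
    ∃ Q : ∀ n : ℕ, Matrix (Fin n → Fin d) (Fin n → Fin d) ℂ,
      (∀ n : ℕ, IsSpectralWindow (tpow σ n) (Q n)
        ((2 : ℝ) ^ (n * (E - δ))) ((2 : ℝ) ^ (n * (E + δ)))) ∧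
      Tendsto (fun n => ((tpow ρ n * Q n).trace).re) atTop (nhds 1) := by
  set U := hσ.isHermitian.eigenvectorUnitary
  set Φ := Unitary.conjStarAlgAut ℂ (Matrix (Fin d) (Fin d) ℂ) U
  set Φₙ := fun n : ℕ =>
    Unitary.conjStarAlgAut ℂ (Matrix (Fin n → Fin d) (Fin n → Fin d) ℂ) (tpowUnitary U n)
  set D : (ℝ → ℝ) → Matrix (Fin d) (Fin d) ℂ :=
    fun f => Matrix.diagonal fun i => (f (hσ.isHermitian.eigenvalues i) : ℂ)
  have hσD : σ = Φ (D id) := hσ.isHermitian.spectral_theorem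
  have hlogD : matLog2 σ = Φ (D (Real.logb 2)) := matLog2_eq_conjStarAlgAut hσ.isHermitian
  obtain ⟨ρ', hρ', rfl, hsupp'⟩ : ∃ ρ', IsDensity ρ' ∧ Φ ρ' = ρ ∧ SuppLe ρ' (D id) := by
    refine ⟨Φ.symm ρ, ?_, Φ.apply_symm_apply ρ, ?_⟩
    · rw [Unitary.conjStarAlgAut_symm]
      exact hρ.conjStarAlgAut _
    · rw [← Φ.symm_apply_apply (D id), ← hσD, Unitary.conjStarAlgAut_symm]
      exact hsupp.conjStarAlgAut _
  have htrace (A B : Matrix (Fin d) (Fin d) ℂ) : (Φ A * Φ B).trace = (A * B).trace := by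
    rw [← map_mul, trace_conjStarAlgAut]
  obtain ⟨Q, hQ, hlim⟩ := exists_typicalProjection_diagonal hρ' hσ.eigenvalues_nonneg hsupp' hδ
  refine ⟨fun n => Φₙ n (Q n), fun n => ?_, ?_⟩
  · rw [hlogD, htrace, hσD, tpow_conjStarAlgAut]
    exact (hQ n).map _
  · refine hlim.congr fun n => ?_
    rw [tpow_conjStarAlgAut, ← map_mul, trace_conjStarAlgAut]

end TypicalProjection

section HypothesisTesting

open scoped MatrixOrder Matrix.Norms.Frobenius

variable {d : ℕ} {ρ R σ : Matrix (Fin d) (Fin d) ℂ}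

lemma qRelEnt_eq_sub {ι : Type*} [Fintype ι] [DecidableEq ι] (ρ σ : Matrix ι ι ℂ) :
    qRelEnt ρ σ = ((ρ * matLog2 ρ).trace).re - ((ρ * matLog2 σ).trace).re := by
  rw [qRelEnt, mul_sub, Matrix.trace_sub, Complex.sub_re]

lemma tpow_mul_conjTranspose_self (R : Matrix (Fin d) (Fin d) ℂ) (n : ℕ) :
    tpow (R * R.conjTranspose) n = tpow R n * (tpow R n).conjTranspose := by
  rw [tpow_mul, tpow_conjTranspose]

lemma norm_tpow_sq (hR : IsDensity (R * R.conjTranspose)) (n : ℕ) : ‖tpow R n‖ ^ 2 = 1 := by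
  rw [frobenius_norm_sq, ← tpow_mul_conjTranspose_self, trace_tpow, hR.2, one_pow, Complex.one_re]

lemma exists_typicalProjection_norm (hR : IsDensity (R * R.conjTranspose)) (hσ : σ.PosSemidef)
    (hsupp : SuppLe (R * R.conjTranspose) σ) {δ : ℝ} (hδ : 0 < δ) :
    let E := ((R * R.conjTranspose * matLog2 σ).trace).re
    ∃ Q : ∀ n : ℕ, Matrix (Fin n → Fin d) (Fin n → Fin d) ℂ,
      (∀ n : ℕ, IsSpectralWindow (tpow σ n) (Q n)
        ((2 : ℝ) ^ (n * (E - δ))) ((2 : ℝ) ^ (n * (E + δ)))) ∧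
      Tendsto (fun n => ‖tpow R n - Q n * tpow R n‖) atTop (nhds 0) := by
  obtain ⟨Q, hQ, hlim⟩ := exists_typicalProjection hR hσ hsupp hδ
  refine ⟨Q, hQ, ?_⟩
  have hsq : Tendsto (fun n => ‖tpow R n - Q n * tpow R n‖ ^ 2) atTop (nhds 0) := by
    simpa [norm_sub_projection_mul_sq (hQ _).isStarProjection, norm_tpow_sq hR,
      tpow_mul_conjTranspose_self] using hlim.const_sub 1
  simpa [Real.sqrt_sq] using hsq.sqrt

lemma stein_converse (hρ : IsDensity ρ) (hσ : σ.PosSemidef) (hsupp : SuppLe ρ σ)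
    {ε δ : ℝ} (hε : ε < 1) (hδ : 0 < δ) :
    ∀ᶠ n : ℕ in atTop, ∀ q : Matrix (Fin n → Fin d) (Fin n → Fin d) ℂ, IsProjn q →
      1 - ε ≤ ((tpow ρ n * q).trace).re →
      (2 : ℝ) ^ (n * (-qRelEnt ρ σ - δ)) ≤ ((tpow σ n * q).trace).re := by
  obtain ⟨R, rfl : ρ = R * R.conjTranspose⟩ :=
    CStarAlgebra.nonneg_iff_eq_mul_star_self.1 hρ.1.nonneg
  have hδ3 : 0 < δ / 3 := by positivity
  obtain ⟨P, hP, hPR⟩ := exists_typicalProjection_norm hρ hρ.1 (fun _ => id) hδ3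
  obtain ⟨Q, hQ, hQR⟩ := exists_typicalProjection_norm hρ hσ hsupp hδ3
  set c := √(1 - ε) / 2
  have hc : 0 < c := half_pos (Real.sqrt_pos.2 (sub_pos.2 hε))
  have hdecay : Tendsto (fun n : ℕ => (2 : ℝ) ^ (-(n * (δ / 3)))) atTop (nhds 0) :=
    (tendsto_rpow_atBot_of_base_gt_one 2 one_lt_two).comp
      (tendsto_neg_atTop_atBot.comp (tendsto_natCast_atTop_atTop.atTop_mul_const hδ3))
  have herr := hPR.add hQR
  rw [add_zero] at herr
  filter_upwards [herr.eventually_lt_const hc, hdecay.eventually_lt_const (pow_pos hc 2)]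
    with n hn hdecay q hq hqR
  rw [isProjn_iff_isStarProjection] at hq
  rw [tpow_mul_conjTranspose_self, ← norm_projection_mul_sq hq] at hqR
  have hcQP : c ≤ ‖q * (Q n * P n) * tpow R n‖ := by
    have hqM : 2 * c ≤ ‖q * tpow R n‖ := by
      rw [mul_div_cancel₀ _ two_ne_zero]
      exact (Real.sqrt_le_left (norm_nonneg _)).2 hqR
    linarith [norm_projection_mul_le_add (P := P n) hq (hQ n).isStarProjection (tpow R n)]
  have hPn := hP n
  rw [tpow_mul_conjTranspose_self] at hPn
  have hbound := hPn.mul_norm_sq_le (hQ n) hq (by positivity) (by positivity)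
  have hexp : n * (-qRelEnt (R * R.conjTranspose) σ - δ) =
      -(n * (δ / 3)) + n * (((R * R.conjTranspose * matLog2 σ).trace).re - δ / 3) -
        n * (((R * R.conjTranspose * matLog2 (R * R.conjTranspose)).trace).re + δ / 3) := by
    rw [qRelEnt_eq_sub]
    ring
  rw [hexp, Real.rpow_sub two_pos, Real.rpow_add two_pos, div_le_iff₀' (by positivity)]
  refine le_trans ?_ hbound
  rw [mul_comm]
  gcongr
  exact hdecay.le.trans (pow_le_pow_left₀ hc.le hcQP 2)

lemma stein_achievability (hρ : IsDensity ρ) (hσ : σ.PosSemidef) (hsupp : SuppLe ρ σ)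
    {ε δ : ℝ} (hε : 0 < ε) (hδ : 0 < δ) :
    ∀ᶠ n : ℕ in atTop, ∃ q : Matrix (Fin n → Fin d) (Fin n → Fin d) ℂ, IsProjn q ∧
      1 - ε ≤ ((tpow ρ n * q).trace).re ∧
      ((tpow σ n * q).trace).re ≤ (2 : ℝ) ^ (n * (-qRelEnt ρ σ + δ)) := by
  obtain ⟨R, rfl : ρ = R * R.conjTranspose⟩ :=
    CStarAlgebra.nonneg_iff_eq_mul_star_self.1 hρ.1.nonneg
  obtain ⟨P, hP, hPR⟩ := exists_typicalProjection_norm hρ hρ.1 (fun _ => id) (half_pos hδ)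
  obtain ⟨Q, hQ, hQR⟩ := exists_typicalProjection_norm hρ hσ hsupp (half_pos hδ)
  have herr := (hPR.add hQR).pow 2
  rw [add_zero, zero_pow two_ne_zero] at herr
  filter_upwards [herr.eventually_le_const hε] with n hn
  obtain ⟨q, hq, hqQP, hσq⟩ := (hP n).exists_projection (hQ n) (by positivity) (by positivity)
  refine ⟨q, isProjn_iff_isStarProjection.2 hq, ?_, ?_⟩
  · have hgentle := pow_le_pow_left₀ (norm_nonneg _)
      (norm_sub_projection_mul_le_add hq (hQ n).isStarProjection hqQP (tpow R n)) 2
    rw [norm_sub_projection_mul_sq hq, norm_tpow_sq hρ, ← tpow_mul_conjTranspose_self] at hgentle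
    linarith
  · rw [trace_tpow, hρ.2, one_pow, Complex.one_re, mul_one, mul_comm,
      ← le_div_iff₀ (by positivity), ← Real.rpow_sub two_pos] at hσq
    refine hσq.trans_eq (congrArg _ ?_)
    rw [qRelEnt_eq_sub]
    ring

end HypothesisTesting

lemma tendsto_csInf_div {X : ℕ → Set ℝ} {D : ℝ}
    (hlower : ∀ δ > 0, ∀ᶠ n : ℕ in atTop, ∀ x ∈ X n, n * (D - δ) ≤ x)
    (hupper : ∀ δ > 0, ∀ᶠ n : ℕ in atTop, ∃ x ∈ X n, x ≤ n * (D + δ)) :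
    Tendsto (fun n : ℕ => sInf (X n) / n) atTop (nhds D) := by
  refine Metric.tendsto_nhds.2 fun η hη => ?_
  filter_upwards [hlower (η / 2) (half_pos hη), hupper (η / 2) (half_pos hη),
    eventually_gt_atTop 0] with n hlow ⟨x, hxX, hx⟩ hn
  have hn' : (0 : ℝ) < n := Nat.cast_pos.2 hn
  have hge : D - η / 2 ≤ sInf (X n) / n := by
    rw [le_div_iff₀' hn']
    exact le_csInf ⟨x, hxX⟩ hlow
  have hle : sInf (X n) / n ≤ D + η / 2 := by
    rw [div_le_iff₀' hn']
    exact (csInf_le ⟨_, hlow⟩ hxX).trans hx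
  rw [Real.dist_eq, abs_lt]
  constructor <;> linarith

theorem quantum_stein_lemma_general {d : ℕ} {ρ σ : Matrix (Fin d) (Fin d) ℂ}
    (hρ : IsDensity ρ) (hσ : σ.PosSemidef) (hsupp : SuppLe ρ σ)
    {ε : ℝ} (hε0 : 0 < ε) (hε1 : ε < 1) :
    Tendsto (fun n : ℕ =>
        (sInf {x : ℝ | ∃ q : Matrix (Fin n → Fin d) (Fin n → Fin d) ℂ, IsProjn q ∧
            1 - ε ≤ ((tpow ρ n * q).trace).re ∧
            x = Real.logb 2 (((tpow σ n * q).trace).re)}) / n)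
      atTop (nhds (-(qRelEnt ρ σ))) := by
  have le_logb {x y : ℝ} (h : (2 : ℝ) ^ x ≤ y) : x ≤ Real.logb 2 y :=
    (Real.le_logb_iff_rpow_le one_lt_two ((Real.rpow_pos_of_pos two_pos x).trans_le h)).2 h
  refine tendsto_csInf_div (fun δ hδ => ?_) fun δ hδ => ?_
  · filter_upwards [stein_converse hρ hσ hsupp hε1 hδ] with n hn
    rintro _ ⟨q, hq, hqρ, rfl⟩
    exact le_logb (hn q hq hqρ)
  · filter_upwards [stein_converse hρ hσ hsupp hε1 hδ,
      stein_achievability hρ hσ hsupp hε0 hδ] with n hlow ⟨q, hq, hqρ, hqσ⟩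
    refine ⟨_, ⟨q, hq, hqρ, rfl⟩, ?_⟩
    have hpos := (Real.rpow_pos_of_pos two_pos _).trans_le (hlow q hq hqρ)
    exact (Real.logb_le_iff_le_rpow one_lt_two hpos).2 hqσ

/-- Quantum Stein's lemma: `(1/n) β_{ε,n}(ρ^{⊗n}, σ^{⊗n}) → −S(ρ,σ)` for every `ε ∈ (0,1)`,
where `β_{ε,n}` is the minimal `log tr(σ^{⊗n} q)` over projections `q` with
`tr(ρ^{⊗n} q) ≥ 1 − ε`. -/
theorem quantum_stein_lemma (d : ℕ) (ρ σ : Matrix (Fin d) (Fin d) ℂ)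
    (hρ : IsDensity ρ) (hσ : IsDensity σ) (hsupp : SuppLe ρ σ)
    (ε : ℝ) (hε0 : 0 < ε) (hε1 : ε < 1) :
    Tendsto (fun n : ℕ =>
        (sInf {x : ℝ | ∃ q : Matrix (Fin n → Fin d) (Fin n → Fin d) ℂ, IsProjn q ∧
            1 - ε ≤ ((tpow ρ n * q).trace).re ∧
            x = Real.logb 2 (((tpow σ n * q).trace).re)}) / n)
      atTop (nhds (-(qRelEnt ρ σ))) :=
  quantum_stein_lemma_general hρ hσ.1 hsupp hε0 hε1
end

section
/- Let ρ, σ be density operators on a d-dimensional Hilbert space H, let l ∈ ℕ, and let D be the abelian subalgebra of B(H^{⊗l}) generated by the spectral projections {e_{l₁,…,l_d}} of σ^{⊗l} together with the pinched operators {e_{l₁,…,l_d} ρ^{⊗l} e_{l₁,…,l_d}}. Then the relative entropy of the restrictions satisfies S(ρ^{⊗l}↾D, σ^{⊗l}↾D) ≥ l·S(ρ,σ) − d·log(l+1). In particular (1/l)·S(ρ^{⊗l}↾D, σ^{⊗l}↾D) → S(ρ,σ) as l → ∞. -/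
open Filter
open scoped ComplexOrder Classical

/-- The spectral projection `e_{l₁,…,l_d}` of `σ^{⊗l}` associated with a composition
`c : Fin d → Fin (l+1)`, built from the one-site eigenprojections `e`. -/
noncomputable def specProj {d : ℕ} (e : Fin d → Matrix (Fin d) (Fin d) ℂ) (l : ℕ)
    (c : Fin d → Fin (l + 1)) : Matrix (Fin l → Fin d) (Fin l → Fin d) ℂ :=
  ∑ i ∈ Finset.univ.filter
      (fun i : Fin l → Fin d => ∀ k, (Finset.univ.filter fun j => i j = k).card = (c k : ℕ)),
    Matrix.of fun x y => ∏ j, e (i j) (x j) (y j)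

/-- The abelian subalgebra `D_{l,ρ}` generated by the spectral projections of `σ^{⊗l}`
together with the pinched operators `e ρ^{⊗l} e`. -/
noncomputable def pinchAlg {d : ℕ} (e : Fin d → Matrix (Fin d) (Fin d) ℂ)
    (ρ : Matrix (Fin d) (Fin d) ℂ) (l : ℕ) :
    Subalgebra ℂ (Matrix (Fin l → Fin d) (Fin l → Fin d) ℂ) :=
  Algebra.adjoin ℂ
    ({M | ∃ c : Fin d → Fin (l + 1), M = specProj e l c} ∪
     {M | ∃ c : Fin d → Fin (l + 1), M = specProj e l c * tpow ρ l * specProj e l c})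

/-!
The density of `ρ^{⊗l}` in `D` is its pinching `E(ρ^{⊗l})` by the projections generating `D`,
whereas `σ^{⊗l}` already lies in `D`. As `log σ^{⊗l}` and `log E(ρ^{⊗l})` commute with these
projections, they have the same expectation in `ρ^{⊗l}` and in `E(ρ^{⊗l})`, so (Hiai–Petz)
`S(ρ^{⊗l}, σ^{⊗l}) = S(E(ρ^{⊗l}), σ^{⊗l}) + S(ρ^{⊗l}, E(ρ^{⊗l}))`.
The left side is `l S(ρ, σ)`. There are at most `(l+1)^d` projections, so the last term is at most
`d log (l+1)`: a positive operator is dominated by the number of projections times its pinching,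
and `A ≤ N B` implies `S(A, B) ≤ log N`, by Jensen's inequality in eigenbases of `A` and `B`.
-/

section ScalarInequalities

lemma sum_mul_logb_le_logb {ι : Type*} [Fintype ι] {w x : ι → ℝ} {b S : ℝ} (hb : 1 < b)
    (hw : ∀ j, 0 ≤ w j) (hw_sum : ∑ j, w j = 1) (hx : ∀ j, w j ≠ 0 → 0 < x j)
    (hS : ∑ j, w j * x j ≤ S) : ∑ j, w j * Real.logb b (x j) ≤ Real.logb b S := by
  have hfilter : ∀ f : ι → ℝ, ∑ j with w j ≠ 0, w j * f j = ∑ j, w j * f j := fun f =>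
    Finset.sum_filter_of_ne fun j _ hj => left_ne_zero_of_mul hj
  have hweight : ∑ j with w j ≠ 0, w j = 1 := by
    simpa only [mul_one, hw_sum] using hfilter fun _ => 1
  have hpos : ∀ j ∈ Finset.univ.filter (w · ≠ 0), x j ∈ Set.Ioi 0 := fun j hj =>
    hx j (Finset.mem_filter.mp hj).2
  have hmean : 0 < ∑ j with w j ≠ 0, w j * x j :=
    (convex_Ioi (0 : ℝ)).sum_mem (fun j _ => hw j) hweight hpos
  have hjensen : ∑ j with w j ≠ 0, w j * Real.log (x j) ≤
      Real.log (∑ j with w j ≠ 0, w j * x j) :=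
    strictConcaveOn_log_Ioi.concaveOn.le_map_sum (fun j _ => hw j) hweight hpos
  rw [hfilter] at hmean
  rw [hfilter, hfilter] at hjensen
  simp only [Real.logb, mul_div_assoc', ← Finset.sum_div]
  exact div_le_div_of_nonneg_right (hjensen.trans (Real.log_le_log hmean hS)) (Real.log_pos hb).le

lemma sum_prod_mul_sum {n ι R : Type*} [Fintype n] [DecidableEq n] [Fintype ι] [CommSemiring R]
    {q : n → ι → R} (hq : ∀ j, ∑ i, q j i = 1) (f : n → ι → R) :
    ∑ z : n → ι, (∏ j, q j (z j)) * ∑ k, f k (z k) = ∑ k, ∑ i, q k i * f k i := by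
  have hmarginal : ∀ k, ∑ z : n → ι, (∏ j, q j (z j)) * f k (z k) = ∑ i, q k i * f k i := by
    intro k
    calc ∑ z : n → ι, (∏ j, q j (z j)) * f k (z k)
        = ∑ z : n → ι, ∏ j, q j (z j) * if j = k then f j (z j) else 1 := by
          simp only [Finset.prod_mul_distrib, Finset.prod_ite_eq', Finset.mem_univ, if_true]
      _ = ∏ j, ∑ i, q j i * if j = k then f j i else 1 :=
          (Fintype.prod_sum fun j i => q j i * if j = k then f j i else 1).symm
      _ = ∑ i, q k i * f k i := by
          rw [Fintype.prod_eq_single k fun j hj => by simp only [if_neg hj, mul_one, hq]]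
          simp only [if_true]
  simp only [Finset.mul_sum]
  rw [Finset.sum_comm]
  exact Finset.sum_congr rfl fun k _ => by simpa only [Finset.mul_sum] using hmarginal k

end ScalarInequalities

section Eigenbasis

variable {m : Type*} [Fintype m]

/-- The transition probability `|⟨uᵢ, vⱼ⟩|²` between the columns of `U` and `V`. -/
noncomputable def transitionProb (U V : Matrix m m ℂ) (i j : m) : ℝ :=
  ‖(star U * V) i j‖ ^ 2

lemma transitionProb_nonneg (U V : Matrix m m ℂ) (i j : m) : 0 ≤ transitionProb U V i j :=
  sq_nonneg _

variable [DecidableEq m]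

/-- The columns of the unitary matrix `U` form an orthonormal eigenbasis of `A`, with real
eigenvalues `a`. -/
structure IsEigenbasis (A U : Matrix m m ℂ) (a : m → ℝ) : Prop where
  mem_unitaryGroup : U ∈ Matrix.unitaryGroup m ℂ
  eq_conj : A = U * Matrix.diagonal (fun i => (a i : ℂ)) * star U

lemma sum_transitionProb {U V : Matrix m m ℂ} (hU : U ∈ Matrix.unitaryGroup m ℂ)
    (hV : V ∈ Matrix.unitaryGroup m ℂ) (i : m) : ∑ j, transitionProb U V i j = 1 := by
  have hW : star U * V ∈ Matrix.unitaryGroup m ℂ := mul_mem (Unitary.star_mem hU) hV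
  have hrow := congrFun (congrFun (Matrix.mem_unitaryGroup_iff.mp hW) i) i
  simp only [Matrix.mul_apply (M := star U * V), Matrix.star_apply, Complex.star_def,
    Complex.mul_conj', Matrix.one_apply_eq] at hrow
  exact_mod_cast hrow

lemma transitionProb_self {U : Matrix m m ℂ} (hU : U ∈ Matrix.unitaryGroup m ℂ) (i j : m) :
    transitionProb U U i j = if i = j then 1 else 0 := by
  rw [transitionProb, Matrix.mem_unitaryGroup_iff'.mp hU, Matrix.one_apply]
  split_ifs <;> simp

lemma exists_isEigenbasis {A : Matrix m m ℂ} (hA : A.IsHermitian) :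
    ∃ U a, IsEigenbasis A U a :=
  ⟨hA.eigenvectorUnitary, hA.eigenvalues, hA.eigenvectorUnitary.2, hA.spectral_theorem⟩

lemma matLog2_eq_cfc (A : Matrix m m ℂ) : matLog2 A = cfc (Real.logb 2) A := by
  by_cases hA : A.IsHermitian
  · rw [matLog2, dif_pos hA, hA.cfc_eq, Matrix.IsHermitian.cfc, Unitary.conjStarAlgAut_apply]
    rfl
  · rw [matLog2, dif_neg hA]
    exact (cfc_apply_of_not_predicate A hA).symm

lemma commute_matLog2 {A B : Matrix m m ℂ} (hA : A.IsHermitian) (h : Commute A B) :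
    Commute (matLog2 A) B := by
  rw [matLog2_eq_cfc]
  exact IsSelfAdjoint.commute_cfc hA h _

namespace IsEigenbasis

variable {A B U V : Matrix m m ℂ} {a b : m → ℝ}

lemma isHermitian (hA : IsEigenbasis A U a) : A.IsHermitian := by
  rw [hA.eq_conj, Matrix.star_eq_conjTranspose]
  refine Matrix.isHermitian_mul_mul_conjTranspose _ (Matrix.isHermitian_diagonal_iff.mpr ?_)
  exact fun i => Complex.conj_ofReal (a i)

lemma mul_eq (hA : IsEigenbasis A U a) :
    A * U = U * Matrix.diagonal (fun i => (a i : ℂ)) := by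
  rw [hA.eq_conj, mul_assoc _ (star U), Matrix.mem_unitaryGroup_iff'.mp hA.mem_unitaryGroup,
    mul_one]

lemma star_mul_eq (hA : IsEigenbasis A U a) :
    star U * A = Matrix.diagonal (fun i => (a i : ℂ)) * star U := by
  rw [hA.eq_conj, ← mul_assoc, ← mul_assoc, Matrix.mem_unitaryGroup_iff'.mp hA.mem_unitaryGroup,
    one_mul]

lemma trace_eq (hA : IsEigenbasis A U a) : A.trace = ((∑ i, a i : ℝ) : ℂ) := by
  rw [hA.eq_conj, Matrix.trace_mul_comm, ← mul_assoc,
    Matrix.mem_unitaryGroup_iff'.mp hA.mem_unitaryGroup, one_mul, Matrix.trace_diagonal,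
    Complex.ofReal_sum]

lemma sum_eq_one (hA : IsEigenbasis A U a) (htr : A.trace = 1) : ∑ i, a i = 1 := by
  rw [hA.trace_eq] at htr
  exact_mod_cast htr

lemma nonneg (hA : IsEigenbasis A U a) (hpos : A.PosSemidef) (i : m) : 0 ≤ a i := by
  have h := hpos.conjTranspose_mul_mul_same U
  rw [← Matrix.star_eq_conjTranspose, hA.star_mul_eq, mul_assoc,
    Matrix.mem_unitaryGroup_iff'.mp hA.mem_unitaryGroup, mul_one] at h
  exact_mod_cast Matrix.posSemidef_diagonal_iff.mp h i

lemma trace_mul_eq (hA : IsEigenbasis A U a) (hB : IsEigenbasis B V b) :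
    (A * B).trace = ((∑ i, ∑ j, a i * b j * transitionProb U V i j : ℝ) : ℂ) := by
  have hcycle : (A * B).trace = (Matrix.diagonal (fun i => (a i : ℂ)) *
      ((star U * V) * Matrix.diagonal (fun j => (b j : ℂ)) * star (star U * V))).trace := by
    rw [hA.eq_conj, hB.eq_conj, mul_assoc, mul_assoc, Matrix.trace_mul_comm, star_mul, star_star]
    simp only [mul_assoc]
  rw [hcycle, Matrix.trace, Complex.ofReal_sum]
  refine Finset.sum_congr rfl fun i _ => ?_
  rw [Matrix.diag_apply, Matrix.diagonal_mul, Matrix.mul_apply, Finset.mul_sum, Complex.ofReal_sum]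
  refine Finset.sum_congr rfl fun j _ => ?_
  rw [Matrix.mul_diagonal, Matrix.star_apply, mul_right_comm _ (b j : ℂ), Complex.star_def,
    Complex.mul_conj', transitionProb]
  push_cast
  ring

/-- `(bᵢ - aⱼ) ⟨vᵢ, uⱼ⟩ = 0` for two eigenbases of one matrix, so `f(bᵢ) = f(aⱼ)` unless
`⟨vᵢ, uⱼ⟩ = 0`. -/
lemma conj_diagonal_eq (hU : IsEigenbasis A U a) (hV : IsEigenbasis A V b) (f : ℝ → ℝ) :
    V * Matrix.diagonal (fun i => (f (b i) : ℂ)) * star V =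
      U * Matrix.diagonal (fun i => (f (a i) : ℂ)) * star U := by
  have hintertwine : Matrix.diagonal (fun i => (b i : ℂ)) * (star V * U) =
      (star V * U) * Matrix.diagonal (fun j => (a j : ℂ)) := by
    rw [← mul_assoc, ← hV.star_mul_eq, mul_assoc, hU.mul_eq, mul_assoc]
  have hintertwine_f : Matrix.diagonal (fun i => (f (b i) : ℂ)) * (star V * U) =
      (star V * U) * Matrix.diagonal (fun j => (f (a j) : ℂ)) := by
    ext i j
    have hij := congrFun (congrFun hintertwine i) j
    rw [Matrix.diagonal_mul, Matrix.mul_diagonal, mul_comm] at hij ⊢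
    rcases eq_or_ne ((star V * U) i j) 0 with hzero | hne
    · simp only [hzero, zero_mul]
    · rw [Complex.ofReal_injective (mul_left_cancel₀ hne hij)]
  have hUU := Matrix.mem_unitaryGroup_iff.mp hU.mem_unitaryGroup
  have hVV := Matrix.mem_unitaryGroup_iff.mp hV.mem_unitaryGroup
  calc V * Matrix.diagonal (fun i => (f (b i) : ℂ)) * star V
      = V * (Matrix.diagonal (fun i => (f (b i) : ℂ)) * (star V * U)) * star U := by
        simp only [mul_assoc, hUU, mul_one]
    _ = U * Matrix.diagonal (fun i => (f (a i) : ℂ)) * star U := by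
        rw [hintertwine_f, ← mul_assoc V, ← mul_assoc V, hVV, one_mul]

lemma matLog2 (hA : IsEigenbasis A U a) :
    IsEigenbasis (matLog2 A) U (fun i => Real.logb 2 (a i)) where
  mem_unitaryGroup := hA.mem_unitaryGroup
  eq_conj := by
    rw [_root_.matLog2, dif_pos hA.isHermitian]
    exact hA.conj_diagonal_eq
      ⟨hA.isHermitian.eigenvectorUnitary.2, hA.isHermitian.spectral_theorem⟩ _

/-- The quantum relative entropy is the classical relative entropy of the Nussbaum–Szkoła
distributions `aᵢ |⟨uᵢ, vⱼ⟩|²` and `bⱼ |⟨uᵢ, vⱼ⟩|²`. -/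
lemma qRelEnt_eq_sum (hA : IsEigenbasis A U a) (hB : IsEigenbasis B V b) :
    qRelEnt A B = ∑ i, ∑ j, a i * transitionProb U V i j *
      (Real.logb 2 (a i) - Real.logb 2 (b j)) := by
  rw [qRelEnt, mul_sub, Matrix.trace_sub, hA.trace_mul_eq hA.matLog2,
    hA.trace_mul_eq hB.matLog2, ← Complex.ofReal_sub, Complex.ofReal_re,
    ← Finset.sum_sub_distrib]
  refine Finset.sum_congr rfl fun i _ => ?_
  have hdiag : ∑ j, a i * Real.logb 2 (a j) * transitionProb U U i j =
      ∑ j, a i * Real.logb 2 (a i) * transitionProb U V i j := by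
    rw [← Finset.mul_sum _ (transitionProb U V i),
      sum_transitionProb hA.mem_unitaryGroup hB.mem_unitaryGroup]
    simp only [transitionProb_self hA.mem_unitaryGroup, mul_ite, mul_one, mul_zero,
      Finset.sum_ite_eq, Finset.mem_univ, if_true]
  rw [hdiag, ← Finset.sum_sub_distrib]
  exact Finset.sum_congr rfl fun j _ => by ring

lemma mul_transitionProb_eq_zero (hA : IsEigenbasis A U a) (hB : IsEigenbasis B V b)
    (h : SuppLe A B) (i : m) {j : m} (hj : b j = 0) : a i * transitionProb U V i j = 0 := by
  have hBv : B.mulVec (V.mulVec (Pi.single j 1)) = 0 := by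
    rw [Matrix.mulVec_mulVec, hB.mul_eq, ← Matrix.mulVec_mulVec, Matrix.diagonal_mulVec_single, hj,
      Complex.ofReal_zero, zero_mul, Pi.single_zero, Matrix.mulVec_zero]
  have hUAV : (star U * A * V).col j = 0 := by
    rw [← Matrix.mulVec_single_one, ← Matrix.mulVec_mulVec, ← Matrix.mulVec_mulVec, h _ hBv,
      Matrix.mulVec_zero]
  have hentry : (a i : ℂ) * (star U * V) i j = 0 := by
    have := congrFun hUAV i
    rwa [hA.star_mul_eq, mul_assoc, Matrix.col_apply, Matrix.diagonal_mul] at this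
  rcases mul_eq_zero.mp hentry with ha | hW
  · rw [Complex.ofReal_eq_zero.mp ha, zero_mul]
  · rw [transitionProb, hW, norm_zero, zero_pow two_ne_zero, mul_zero]

lemma dotProduct_mulVec_eq_sum (hA : IsEigenbasis A U a) (y : m → ℂ) :
    star y ⬝ᵥ A.mulVec y = ((∑ i, a i * ‖(star U).mulVec y i‖ ^ 2 : ℝ) : ℂ) := by
  have hstar : Matrix.vecMul (star y) U = star ((star U).mulVec y) := by
    rw [Matrix.star_mulVec, Matrix.star_eq_conjTranspose, Matrix.conjTranspose_conjTranspose]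
  conv_lhs => rw [hA.eq_conj]
  rw [mul_assoc, ← Matrix.mulVec_mulVec, Matrix.dotProduct_mulVec, ← Matrix.mulVec_mulVec, hstar,
    dotProduct, Complex.ofReal_sum]
  refine Finset.sum_congr rfl fun i _ => ?_
  rw [Matrix.mulVec_diagonal, Pi.star_apply, Complex.star_def, mul_left_comm, Complex.conj_mul']
  push_cast
  rfl

end IsEigenbasis

end Eigenbasis

section Domination

variable {m : Type*} [Fintype m] {A B : Matrix m m ℂ} {N : ℝ}

lemma suppLe_of_posSemidef_smul_sub (hA : A.PosSemidef) (hAB : (N • B - A).PosSemidef) :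
    SuppLe A B := by
  intro v hv
  rw [← hA.dotProduct_mulVec_zero_iff]
  refine le_antisymm ?_ (hA.dotProduct_mulVec_nonneg v)
  have h := hAB.dotProduct_mulVec_nonneg v
  rwa [Matrix.sub_mulVec, Matrix.smul_mulVec, hv, smul_zero, zero_sub, dotProduct_neg,
    neg_nonneg] at h

variable [DecidableEq m] {U V : Matrix m m ℂ} {a b : m → ℝ}

lemma IsEigenbasis.mul_norm_sq_mulVec_le (hA : IsEigenbasis A U a) (hB : IsEigenbasis B V b)
    (ha : ∀ i, 0 ≤ a i) (hAB : (N • B - A).PosSemidef) (w : m → ℂ) (i : m) :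
    a i * ‖(star U * V).mulVec w i‖ ^ 2 ≤ N * ∑ j, b j * ‖w j‖ ^ 2 := by
  have h := hAB.dotProduct_mulVec_nonneg (V.mulVec w)
  rw [Matrix.sub_mulVec, dotProduct_sub, Matrix.smul_mulVec, dotProduct_smul,
    hA.dotProduct_mulVec_eq_sum, hB.dotProduct_mulVec_eq_sum, Matrix.mulVec_mulVec,
    Matrix.mulVec_mulVec, Matrix.mem_unitaryGroup_iff'.mp hB.mem_unitaryGroup, Matrix.one_mulVec,
    Complex.real_smul, ← Complex.ofReal_mul, ← Complex.ofReal_sub, Complex.zero_le_real,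
    sub_nonneg] at h
  refine le_trans ?_ h
  exact Finset.single_le_sum (f := fun i => a i * ‖(star U * V).mulVec w i‖ ^ 2)
    (fun i _ => mul_nonneg (ha i) (sq_nonneg _)) (Finset.mem_univ i)

/-- This is `aᵢ ⟨uᵢ, B⁻¹ uᵢ⟩ ≤ N`, with `B⁻¹` inverted on the support of `B` only. -/
lemma IsEigenbasis.mul_sum_transitionProb_div_le (hA : IsEigenbasis A U a)
    (hB : IsEigenbasis B V b) (ha : ∀ i, 0 ≤ a i) (hb : ∀ j, 0 ≤ b j) (hN : 0 ≤ N)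
    (hAB : (N • B - A).PosSemidef) (i : m) : a i * ∑ j, transitionProb U V i j / b j ≤ N := by
  set T := ∑ j, transitionProb U V i j / b j with hT
  have hT_nonneg : 0 ≤ T :=
    Finset.sum_nonneg fun j _ => div_nonneg (transitionProb_nonneg U V i j) (hb j)
  -- the coordinates of `B⁻¹ uᵢ` in the basis `V`
  let w : m → ℂ := fun j => star ((star U * V) i j) / b j
  have hWw : (star U * V).mulVec w i = (T : ℂ) := by
    rw [Matrix.mulVec, dotProduct, hT, Complex.ofReal_sum]
    refine Finset.sum_congr rfl fun j _ => ?_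
    rw [mul_div_assoc', Complex.star_def, Complex.mul_conj', transitionProb]
    push_cast
    rfl
  have hbw : ∑ j, b j * ‖w j‖ ^ 2 = T := by
    refine Finset.sum_congr rfl fun j _ => ?_
    rw [norm_div, norm_star, Complex.norm_real, Real.norm_of_nonneg (hb j), div_pow, transitionProb]
    rcases eq_or_ne (b j) 0 with hj | hj
    · simp only [hj, zero_mul, div_zero]
    · field_simp
  have h := hA.mul_norm_sq_mulVec_le hB ha hAB w i
  rw [hWw, hbw, Complex.norm_real, Real.norm_of_nonneg hT_nonneg, pow_two, ← mul_assoc] at h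
  rcases hT_nonneg.eq_or_lt with hzero | hpos
  · rwa [← hzero, mul_zero]
  · exact le_of_mul_le_mul_right h hpos

lemma qRelEnt_le_logb_of_posSemidef_smul_sub (hA : IsDensity A) (hB : B.PosSemidef) (hN : 0 ≤ N)
    (hAB : (N • B - A).PosSemidef) : qRelEnt A B ≤ Real.logb 2 N := by
  obtain ⟨U, a, hU⟩ := exists_isEigenbasis hA.1.isHermitian
  obtain ⟨V, b, hV⟩ := exists_isEigenbasis hB.isHermitian
  have ha := hU.nonneg hA.1
  have hb := hV.nonneg hB
  have hb_pos : ∀ i, 0 < a i → ∀ j, transitionProb U V i j ≠ 0 → 0 < b j := fun i hi j hij =>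
    (hb j).lt_of_ne' fun hj => (mul_ne_zero hi.ne' hij)
      (hU.mul_transitionProb_eq_zero hV (suppLe_of_posSemidef_smul_sub hA.1 hAB) i hj)
  have hrow : ∀ i, ∑ j, a i * transitionProb U V i j * (Real.logb 2 (a i) - Real.logb 2 (b j)) ≤
      a i * Real.logb 2 N := by
    intro i
    rcases (ha i).eq_or_lt with hi | hi
    · simp only [← hi, zero_mul, Finset.sum_const_zero, le_refl]
    have hlog : ∀ j, a i * transitionProb U V i j * (Real.logb 2 (a i) - Real.logb 2 (b j)) =
        a i * (transitionProb U V i j * Real.logb 2 (a i / b j)) := by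
      intro j
      rcases eq_or_ne (transitionProb U V i j) 0 with hij | hij
      · simp only [hij, mul_zero, zero_mul]
      · rw [Real.logb_div hi.ne' (hb_pos i hi j hij).ne', mul_assoc]
    simp only [hlog, ← Finset.mul_sum]
    refine mul_le_mul_of_nonneg_left (sum_mul_logb_le_logb one_lt_two (transitionProb_nonneg U V i)
      (sum_transitionProb hU.mem_unitaryGroup hV.mem_unitaryGroup i)
      (fun j hij => div_pos hi (hb_pos i hi j hij)) ?_) hi.le
    simpa only [Finset.mul_sum, mul_div_left_comm] using
      hU.mul_sum_transitionProb_div_le hV ha hb hN hAB i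
  calc qRelEnt A B ≤ ∑ i, a i * Real.logb 2 N := by
        rw [hU.qRelEnt_eq_sum hV]
        exact Finset.sum_le_sum fun i _ => hrow i
    _ = Real.logb 2 N := by rw [← Finset.sum_mul, hU.sum_eq_one hA.2, one_mul]

end Domination

section Pinching

/-- Half the sum of the `(K c - K c') R (K c - K c')ᴴ`: the Cauchy–Schwarz inequality for the
positive form given by `R`. -/
lemma posSemidef_card_smul_sum_sub {m n ι : Type*} [Fintype m] [Finite n] [Fintype ι]
    {R : Matrix m m ℂ} (hR : R.PosSemidef) (K : ι → Matrix n m ℂ) :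
    (Fintype.card ι • ∑ c, K c * R * (K c).conjTranspose -
      (∑ c, K c) * R * (∑ c, K c).conjTranspose).PosSemidef := by
  have hdouble : ∑ c, ∑ c', (K c - K c') * R * (K c - K c').conjTranspose =
      (2 : ℝ) • (Fintype.card ι • ∑ c, K c * R * (K c).conjTranspose -
        (∑ c, K c) * R * (∑ c, K c).conjTranspose) := by
    simp only [Matrix.conjTranspose_sub, Matrix.conjTranspose_sum, Matrix.sub_mul, Matrix.mul_sub,
      Finset.sum_sub_distrib, Finset.sum_const, Finset.card_univ, ← Finset.smul_sum,
      ← Matrix.sum_mul, ← Matrix.mul_sum, two_smul]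
    abel
  rw [← inv_smul_smul₀ (two_ne_zero' ℝ) (_ - _), ← hdouble]
  exact (Matrix.posSemidef_sum _ fun c _ => Matrix.posSemidef_sum _ fun c' _ =>
    hR.mul_mul_conjTranspose_same _).smul (by positivity)

lemma completeOrthogonalIdempotents_fiber_sum {R I C : Type*} [Semiring R] [Fintype I] [Fintype C]
    [DecidableEq C] {E : I → R} (hE : CompleteOrthogonalIdempotents E) (τ : I → C) :
    CompleteOrthogonalIdempotents fun c => ∑ i with τ i = c, E i where
  idem _ := hE.isIdempotentElem_sum
  ortho c c' hc := by
    refine (Finset.sum_mul _ _ _).trans (Finset.sum_eq_zero fun i hi => ?_)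
    refine hE.mul_sum_of_notMem fun hi' => hc ?_
    rw [← (Finset.mem_filter.mp hi).2, ← (Finset.mem_filter.mp hi').2]
  complete := (Finset.sum_fiberwise _ _ _).trans hE.complete

lemma commute_compression {A ι : Type*} [Semiring A] {P : ι → A} (hP : OrthogonalIdempotents P)
    (R : A) (c c' : ι) : Commute (P c * R * P c) (P c') := by
  rcases eq_or_ne c c' with rfl | hc
  · rw [commute_iff_eq, mul_assoc _ (P c), (hP.idem c).eq, ← mul_assoc, ← mul_assoc,
      (hP.idem c).eq]
  · rw [commute_iff_eq, mul_assoc _ (P c), hP.ortho hc, ← mul_assoc, ← mul_assoc, hP.ortho hc.symm,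
      mul_zero, zero_mul, zero_mul]

variable {m ι : Type*} [Fintype m] [Fintype ι]

/-- The pinching `R ↦ ∑ c, P c R P c` by a family `P`, usually a complete family of mutually
orthogonal projections. -/
noncomputable def pinching (P : ι → Matrix m m ℂ) (R : Matrix m m ℂ) : Matrix m m ℂ :=
  ∑ c, P c * R * P c

lemma posSemidef_pinching {P : ι → Matrix m m ℂ} (hP : ∀ c, (P c).IsHermitian) {R : Matrix m m ℂ}
    (hR : R.PosSemidef) : (pinching P R).PosSemidef :=
  Matrix.posSemidef_sum _ fun c _ => by
    simpa only [(hP c).eq] using hR.mul_mul_conjTranspose_same (P c)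

variable [DecidableEq m] {P : ι → Matrix m m ℂ} {R S L : Matrix m m ℂ}

lemma trace_pinching_mul (hP : CompleteOrthogonalIdempotents P) (hL : ∀ c, Commute L (P c)) :
    (pinching P R * L).trace = (R * L).trace := by
  have hblock : ∀ c, (P c * R * P c * L).trace = (R * L * P c).trace := by
    intro c
    rw [mul_assoc, ← (hL c).eq, mul_assoc, Matrix.trace_mul_comm]
    simp only [mul_assoc, (hP.idem c).eq]
  rw [pinching, Finset.sum_mul, Matrix.trace_sum, Finset.sum_congr rfl fun c _ => hblock c,
    ← Matrix.trace_sum, ← Finset.mul_sum, hP.complete, mul_one]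

/-- The Hiai–Petz identity. -/
lemma qRelEnt_pinching_add_qRelEnt (hP : CompleteOrthogonalIdempotents P)
    (hPR : (pinching P R).IsHermitian) (hS : S.IsHermitian) (hSP : ∀ c, Commute S (P c)) :
    qRelEnt (pinching P R) S + qRelEnt R (pinching P R) = qRelEnt R S := by
  have hcomm : ∀ c, Commute (pinching P R) (P c) := fun c =>
    Commute.sum_left _ _ _ fun c' _ => commute_compression hP.toOrthogonalIdempotents R c' c
  have htrace := trace_pinching_mul (R := R) hP fun c =>
    (commute_matLog2 hPR (hcomm c)).sub_left (commute_matLog2 hS (hSP c))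
  rw [qRelEnt, htrace, qRelEnt, qRelEnt, ← Complex.add_re, ← Matrix.trace_add, ← mul_add,
    add_comm, sub_add_sub_cancel]

lemma qRelEnt_pinching_le_logb_card (hP : ∀ c, (P c).IsHermitian) (hsum : ∑ c, P c = 1)
    (hR : IsDensity R) : qRelEnt R (pinching P R) ≤ Real.logb 2 (Fintype.card ι) := by
  refine qRelEnt_le_logb_of_posSemidef_smul_sub hR (posSemidef_pinching hP hR.1)
    (Nat.cast_nonneg _) ?_
  simpa only [hsum, (hP _).eq, Matrix.conjTranspose_one, one_mul, mul_one, pinching,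
    Nat.cast_smul_eq_nsmul] using posSemidef_card_smul_sum_sub hR.1 P

end Pinching

section Restriction

variable {m : Type*} [Fintype m] [DecidableEq m] {D : Subalgebra ℂ (Matrix m m ℂ)}
  {R S X Y : Matrix m m ℂ}

/-- `X` is the density, within the subalgebra `D`, of the restriction to `D` of the functional
`b ↦ tr (R b)`. -/
def IsRestrictedDensity (D : Subalgebra ℂ (Matrix m m ℂ)) (R X : Matrix m m ℂ) : Prop :=
  X ∈ D ∧ ∀ b ∈ D, (X * b).trace = (R * b).trace

lemma IsRestrictedDensity.unique (hD : star D = D) (hX : IsRestrictedDensity D R X)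
    (hY : IsRestrictedDensity D R Y) : X = Y := by
  have hstar : star (X - Y) ∈ D := by
    rw [← Subalgebra.mem_star_iff, hD]
    exact sub_mem hX.1 hY.1
  have hzero : ((X - Y) * (X - Y).conjTranspose).trace = 0 := by
    rw [← Matrix.star_eq_conjTranspose, sub_mul, Matrix.trace_sub, hX.2 _ hstar, hY.2 _ hstar,
      sub_self]
  exact sub_eq_zero.mp (Matrix.trace_mul_conjTranspose_self_eq_zero_iff.mp hzero)

variable {ι : Type*} {P : ι → Matrix m m ℂ}

/-- The algebra generated by the projections `P c` and the compressions `P c R P c`. -/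
noncomputable def pinchingAlgebra (P : ι → Matrix m m ℂ) (R : Matrix m m ℂ) :
    Subalgebra ℂ (Matrix m m ℂ) :=
  Algebra.adjoin ℂ ({M | ∃ c, M = P c} ∪ {M | ∃ c, M = P c * R * P c})

lemma mem_pinchingAlgebra (P : ι → Matrix m m ℂ) (R : Matrix m m ℂ) (c : ι) :
    P c ∈ pinchingAlgebra P R :=
  Algebra.subset_adjoin (Or.inl ⟨c, rfl⟩)

lemma compression_mem_pinchingAlgebra (P : ι → Matrix m m ℂ) (R : Matrix m m ℂ) (c : ι) :
    P c * R * P c ∈ pinchingAlgebra P R :=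
  Algebra.subset_adjoin (Or.inr ⟨c, rfl⟩)

lemma star_pinchingAlgebra (hP : ∀ c, (P c).IsHermitian) (hR : R.IsHermitian) :
    star (pinchingAlgebra P R) = pinchingAlgebra P R := by
  have hgen : ∀ M ∈ {M | ∃ c, M = P c} ∪ {M | ∃ c, M = P c * R * P c}, star M = M := by
    rintro _ (⟨c, rfl⟩ | ⟨c, rfl⟩)
    · exact hP c
    · simp only [star_mul, Matrix.star_eq_conjTranspose, (hP c).eq, hR.eq, mul_assoc]
  rw [pinchingAlgebra, Subalgebra.star_adjoin_comm, ← Set.image_star,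
    Set.image_congr hgen, Set.image_id']

lemma commute_of_mem_pinchingAlgebra (hP : OrthogonalIdempotents P)
    (hX : X ∈ pinchingAlgebra P R) (c : ι) : Commute X (P c) := by
  have hle : pinchingAlgebra P R ≤ Subalgebra.centralizer ℂ (Set.range P) := by
    refine Algebra.adjoin_le ?_
    rintro _ (⟨c, rfl⟩ | ⟨c, rfl⟩) _ ⟨c', rfl⟩
    · rcases eq_or_ne c' c with rfl | hc
      · rfl
      · rw [hP.ortho hc, hP.ortho hc.symm]
    · exact (commute_compression hP R c c').eq.symm
  exact (hle hX _ ⟨c, rfl⟩).symm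

variable [Fintype ι]

lemma isRestrictedDensity_pinching (hP : CompleteOrthogonalIdempotents P) (R : Matrix m m ℂ) :
    IsRestrictedDensity (pinchingAlgebra P R) R (pinching P R) :=
  ⟨sum_mem fun c _ => compression_mem_pinchingAlgebra P R c, fun _ hb =>
    trace_pinching_mul hP (commute_of_mem_pinchingAlgebra hP.toOrthogonalIdempotents hb)⟩

theorem qRelEnt_sub_logb_card_le_of_isRestrictedDensity (hP : CompleteOrthogonalIdempotents P)
    (hPh : ∀ c, (P c).IsHermitian) (hR : IsDensity R) (hS : S.IsHermitian)
    (hSmem : S ∈ pinchingAlgebra P R) (hX : IsRestrictedDensity (pinchingAlgebra P R) R X)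
    (hY : IsRestrictedDensity (pinchingAlgebra P R) S Y) :
    qRelEnt R S - Real.logb 2 (Fintype.card ι) ≤ qRelEnt X Y := by
  have hstar := star_pinchingAlgebra hPh hR.1.isHermitian
  rw [hX.unique hstar (isRestrictedDensity_pinching hP R),
    hY.unique hstar ⟨hSmem, fun _ _ => rfl⟩, sub_le_iff_le_add,
    ← qRelEnt_pinching_add_qRelEnt hP (posSemidef_pinching hPh hR.1).isHermitian hS
      (commute_of_mem_pinchingAlgebra hP.toOrthogonalIdempotents hSmem)]
  exact add_le_add_right (qRelEnt_pinching_le_logb_card hPh hP.complete hR) _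

end Restriction

section TensorProduct

variable {n κ R : Type*} [Fintype n] [CommSemiring R]

/-- Tensor product of a finite family of matrices, realized on the index set `n → κ`. -/
def piTensor (A : n → Matrix κ κ R) : Matrix (n → κ) (n → κ) R :=
  Matrix.of fun x y => ∏ j, A j (x j) (y j)

lemma star_piTensor [StarRing R] (A : n → Matrix κ κ R) :
    star (piTensor A) = piTensor fun j => star (A j) := by
  ext x y
  simp only [piTensor, Matrix.star_apply, Matrix.of_apply, star_prod]

lemma isHermitian_piTensor {A : n → Matrix κ κ ℂ} (hA : ∀ j, (A j).IsHermitian) :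
    (piTensor A).IsHermitian :=
  (star_piTensor A).trans (congrArg piTensor (funext hA))

lemma piTensor_smul (s : n → R) (A : n → Matrix κ κ R) :
    (piTensor fun j => s j • A j) = (∏ j, s j) • piTensor A := by
  ext x y
  simp only [piTensor, Matrix.smul_apply, Matrix.of_apply, smul_eq_mul, Finset.prod_mul_distrib]

lemma piTensor_eq_zero {A : n → Matrix κ κ R} {j : n} (h : A j = 0) : piTensor A = 0 := by
  ext x y
  exact Finset.prod_eq_zero (Finset.mem_univ j) (by rw [h, Matrix.zero_apply])

lemma piTensor_mul [DecidableEq n] [Fintype κ] (A B : n → Matrix κ κ R) :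
    piTensor A * piTensor B = piTensor fun j => A j * B j := by
  ext x y
  simp only [piTensor, Matrix.mul_apply, Matrix.of_apply, ← Finset.prod_mul_distrib,
    Fintype.prod_sum]

open scoped MatrixOrder in
lemma posSemidef_piTensor [Finite κ] {A : n → Matrix κ κ ℂ} (hA : ∀ j, (A j).PosSemidef) :
    (piTensor A).PosSemidef := by
  cases nonempty_fintype κ
  classical
  choose B hB using fun j => CStarAlgebra.nonneg_iff_eq_star_mul_self.mp (hA j).nonneg
  rw [funext hB, ← piTensor_mul]
  simp only [← star_piTensor]
  exact Matrix.posSemidef_conjTranspose_mul_self _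

lemma piTensor_diagonal [DecidableEq κ] (a : n → κ → R) :
    (piTensor fun j => Matrix.diagonal (a j)) = Matrix.diagonal fun x => ∏ j, a j (x j) := by
  ext x y
  simp only [piTensor, Matrix.of_apply, Matrix.diagonal_apply, Fintype.prod_ite_zero, funext_iff]

lemma piTensor_one [DecidableEq κ] : (piTensor fun _ : n => (1 : Matrix κ κ R)) = 1 := by
  simpa only [Matrix.diagonal_one, Finset.prod_const_one] using
    piTensor_diagonal fun (_ : n) (_ : κ) => (1 : R)

variable [DecidableEq n]

lemma trace_piTensor [Fintype κ] (A : n → Matrix κ κ R) :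
    (piTensor A).trace = ∏ j, (A j).trace := by
  simp only [Matrix.trace, Matrix.diag_apply, piTensor, Matrix.of_apply, Fintype.prod_sum]

lemma piTensor_sum {ι : Type*} [Fintype ι] (A : n → ι → Matrix κ κ R) :
    (piTensor fun j => ∑ k, A j k) = ∑ i : n → ι, piTensor fun j => A j (i j) := by
  ext x y
  simp only [piTensor, Matrix.sum_apply, Matrix.of_apply, Fintype.prod_sum]

lemma completeOrthogonalIdempotents_piTensor [Fintype κ] [DecidableEq κ] {ι : Type*} [Fintype ι]
    {e : ι → Matrix κ κ R} (he : CompleteOrthogonalIdempotents e) :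
    CompleteOrthogonalIdempotents fun i : n → ι => piTensor fun j => e (i j) where
  idem i := (piTensor_mul _ _).trans (by simp only [(he.idem _).eq])
  ortho i i' hi := by
    obtain ⟨j, hj⟩ := Function.ne_iff.mp hi
    exact (piTensor_mul _ _).trans (piTensor_eq_zero (he.ortho hj))
  complete := by rw [← piTensor_sum fun _ => e, he.complete, piTensor_one]

variable [Fintype κ]

lemma isDensity_piTensor {ρ : n → Matrix κ κ ℂ} (hρ : ∀ j, IsDensity (ρ j)) :
    IsDensity (piTensor ρ) :=
  ⟨posSemidef_piTensor fun j => (hρ j).1, by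
    simp only [trace_piTensor, (hρ _).2, Finset.prod_const_one]⟩

lemma transitionProb_piTensor (U V : n → Matrix κ κ ℂ) (x y : n → κ) :
    transitionProb (piTensor U) (piTensor V) x y =
      ∏ j, transitionProb (U j) (V j) (x j) (y j) := by
  rw [transitionProb, star_piTensor, piTensor_mul]
  simp only [piTensor, Matrix.of_apply, norm_prod, Finset.prod_pow, transitionProb]

variable [DecidableEq κ] {A U V : n → Matrix κ κ ℂ} {a : n → κ → ℝ}

lemma piTensor_mem_unitaryGroup (hU : ∀ j, U j ∈ Matrix.unitaryGroup κ ℂ) :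
    piTensor U ∈ Matrix.unitaryGroup (n → κ) ℂ := by
  simp only [Matrix.mem_unitaryGroup_iff, star_piTensor, piTensor_mul,
    Matrix.mem_unitaryGroup_iff.mp (hU _), piTensor_one]

lemma IsEigenbasis.piTensor (hA : ∀ j, IsEigenbasis (A j) (U j) (a j)) :
    IsEigenbasis (piTensor A) (piTensor U) (fun x => ∏ j, a j (x j)) where
  mem_unitaryGroup := piTensor_mem_unitaryGroup fun j => (hA j).mem_unitaryGroup
  eq_conj := by
    simp only [Complex.ofReal_prod]
    rw [← piTensor_diagonal fun j i => (a j i : ℂ), star_piTensor, piTensor_mul, piTensor_mul]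
    exact congrArg _root_.piTensor (funext fun j => (hA j).eq_conj)

lemma qRelEnt_piTensor {ρ σ : n → Matrix κ κ ℂ} (hρ : ∀ j, (ρ j).IsHermitian)
    (htr : ∀ j, (ρ j).trace = 1) (hσ : ∀ j, (σ j).IsHermitian) (hsupp : ∀ j, SuppLe (ρ j) (σ j)) :
    qRelEnt (piTensor ρ) (piTensor σ) = ∑ j, qRelEnt (ρ j) (σ j) := by
  choose U a hU using fun j => exists_isEigenbasis (hρ j)
  choose V b hV using fun j => exists_isEigenbasis (hσ j)
  let q : n → κ × κ → ℝ := fun j p => a j p.1 * transitionProb (U j) (V j) p.1 p.2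
  have hq : ∀ j, ∑ p, q j p = 1 := fun j => by
    simp only [q, Fintype.sum_prod_type, ← Finset.mul_sum, mul_one, (hU j).sum_eq_one (htr j),
      sum_transitionProb (hU j).mem_unitaryGroup (hV j).mem_unitaryGroup]
  have hlog : ∀ x y : n → κ, (∏ j, q j (x j, y j)) *
        (Real.logb 2 (∏ j, a j (x j)) - Real.logb 2 (∏ j, b j (y j))) =
      (∏ j, q j (x j, y j)) * ∑ j, (Real.logb 2 (a j (x j)) - Real.logb 2 (b j (y j))) := by
    intro x y
    rcases eq_or_ne (∏ j, q j (x j, y j)) 0 with hzero | hne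
    · rw [hzero, zero_mul, zero_mul]
    · have hq_ne := Finset.prod_ne_zero_iff.mp hne
      rw [Finset.sum_sub_distrib, Real.logb_prod _ _ fun j hj => left_ne_zero_of_mul (hq_ne j hj),
        Real.logb_prod _ _ fun j hj hb =>
          hq_ne j hj ((hU j).mul_transitionProb_eq_zero (hV j) (hsupp j) _ hb)]
  calc qRelEnt (piTensor ρ) (piTensor σ)
      = ∑ x : n → κ, ∑ y : n → κ, (∏ j, q j (x j, y j)) *
          ∑ j, (Real.logb 2 (a j (x j)) - Real.logb 2 (b j (y j))) := by
        rw [(IsEigenbasis.piTensor hU).qRelEnt_eq_sum (IsEigenbasis.piTensor hV)]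
        simp only [transitionProb_piTensor, ← Finset.prod_mul_distrib, ← hlog, q]
    _ = ∑ z : n → κ × κ, (∏ j, q j (z j)) *
          ∑ j, (Real.logb 2 (a j (z j).1) - Real.logb 2 (b j (z j).2)) := by
        rw [← (Equiv.arrowProdEquivProdArrow n (fun _ => κ) (fun _ => κ)).symm.sum_comp,
          Fintype.sum_prod_type]
        rfl
    _ = ∑ j, qRelEnt (ρ j) (σ j) := by
        rw [sum_prod_mul_sum hq fun j p => Real.logb 2 (a j p.1) - Real.logb 2 (b j p.2)]
        simp only [Fintype.sum_prod_type, (hU _).qRelEnt_eq_sum (hV _), q]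

end TensorProduct

section OccupationProjections

variable {κ ι R : Type*} [DecidableEq ι] [CommSemiring R]

/-- The occupation numbers of a configuration `i`: how often each value `k` is taken. -/
def occupation {l : ℕ} (i : Fin l → ι) (k : ι) : Fin (l + 1) :=
  ⟨(Finset.univ.filter fun j => i j = k).card, Nat.lt_succ_of_le (card_finset_fin_le _)⟩

variable [Fintype ι]

/-- The projection `e_c = ∑ e_{i₁} ⊗ ⋯ ⊗ e_{i_l}` over the configurations with occupation numbers
`c`; `specProj` for arbitrary finite index sets. -/
def occupationProj (e : ι → Matrix κ κ R) (l : ℕ) (c : ι → Fin (l + 1)) :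
    Matrix (Fin l → κ) (Fin l → κ) R :=
  ∑ i with occupation i = c, piTensor fun j => e (i j)

lemma prod_comp_eq_prod_pow_occupation {l : ℕ} (i : Fin l → ι) (f : ι → R) :
    ∏ j, f (i j) = ∏ k, f k ^ (occupation i k : ℕ) := by
  rw [Finset.prod_comp f i]
  refine Finset.prod_subset (Finset.subset_univ _) fun k _ hk => ?_
  have hempty : (Finset.univ.filter fun j => i j = k) = ∅ :=
    Finset.filter_eq_empty_iff.mpr fun j hj hjk => hk (Finset.mem_image.mpr ⟨j, hj, hjk⟩)
  rw [hempty, Finset.card_empty, pow_zero]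

lemma piTensor_sum_smul (e : ι → Matrix κ κ R) (lam : ι → R) (l : ℕ) :
    (piTensor fun _ : Fin l => ∑ k, lam k • e k) =
      ∑ c, (∏ k, lam k ^ (c k : ℕ)) • occupationProj e l c := by
  simp only [piTensor_sum fun (_ : Fin l) k => lam k • e k, piTensor_smul,
    prod_comp_eq_prod_pow_occupation, occupationProj, Finset.smul_sum]
  rw [← Finset.sum_fiberwise Finset.univ occupation]
  refine Finset.sum_congr rfl fun c _ => Finset.sum_congr rfl fun i hi => ?_
  rw [(Finset.mem_filter.mp hi).2]

lemma isHermitian_occupationProj {e : ι → Matrix κ κ ℂ} (he : ∀ k, (e k).IsHermitian)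
    (l : ℕ) (c : ι → Fin (l + 1)) : (occupationProj e l c).IsHermitian :=
  isSelfAdjoint_sum _ fun _ _ => isHermitian_piTensor fun _ => he _

lemma completeOrthogonalIdempotents_occupationProj [Fintype κ] [DecidableEq κ]
    {e : ι → Matrix κ κ R} (he : CompleteOrthogonalIdempotents e) (l : ℕ) :
    CompleteOrthogonalIdempotents (occupationProj e l) :=
  completeOrthogonalIdempotents_fiber_sum (completeOrthogonalIdempotents_piTensor he) occupation

lemma specProj_eq_occupationProj {d : ℕ} (e : Fin d → Matrix (Fin d) (Fin d) ℂ) (l : ℕ) :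
    specProj e l = occupationProj e l := by
  ext1 c
  simp only [specProj, occupationProj, piTensor, occupation, funext_iff, Fin.ext_iff]

lemma pinchAlg_eq_pinchingAlgebra {d : ℕ} (e : Fin d → Matrix (Fin d) (Fin d) ℂ)
    (ρ : Matrix (Fin d) (Fin d) ℂ) (l : ℕ) :
    pinchAlg e ρ l = pinchingAlgebra (occupationProj e l) (piTensor fun _ => ρ) := by
  rw [← specProj_eq_occupationProj]
  rfl

end OccupationProjections

theorem restricted_rel_entropy_lower_bound_general {κ ι : Type*} [Fintype κ] [DecidableEq κ]
    [Fintype ι] [DecidableEq ι] {ρ σ : Matrix κ κ ℂ} (hρ : IsDensity ρ) (hσ : σ.PosSemidef)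
    (hsupp : SuppLe ρ σ) {e : ι → Matrix κ κ ℂ} {lam : ι → ℝ}
    (he : CompleteOrthogonalIdempotents e) (heh : ∀ k, (e k).IsHermitian)
    (hspec : σ = ∑ k, (lam k : ℂ) • e k) {l : ℕ} {Dψ Dφ : Matrix (Fin l → κ) (Fin l → κ) ℂ}
    (hψ : IsRestrictedDensity (pinchingAlgebra (occupationProj e l) (piTensor fun _ => ρ))
      (piTensor fun _ => ρ) Dψ)
    (hφ : IsRestrictedDensity (pinchingAlgebra (occupationProj e l) (piTensor fun _ => ρ))
      (piTensor fun _ => σ) Dφ) :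
    l * qRelEnt ρ σ - Fintype.card ι * Real.logb 2 (l + 1) ≤ qRelEnt Dψ Dφ := by
  have hadd : qRelEnt (piTensor fun _ : Fin l => ρ) (piTensor fun _ => σ) = l * qRelEnt ρ σ := by
    rw [qRelEnt_piTensor (fun _ => hρ.1.isHermitian) (fun _ => hρ.2) (fun _ => hσ.isHermitian)
      fun _ => hsupp, Fin.sum_const, nsmul_eq_mul]
  have hcard : Real.logb 2 (Fintype.card (ι → Fin (l + 1))) =
      Fintype.card ι * Real.logb 2 (l + 1) := by
    rw [Fintype.card_fun, Fintype.card_fin, Nat.cast_pow, Real.logb_pow, Nat.cast_succ]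
  have hσ_mem : (piTensor fun _ : Fin l => σ) ∈
      pinchingAlgebra (occupationProj e l) (piTensor fun _ => ρ) := by
    rw [hspec, piTensor_sum_smul]
    exact sum_mem fun c _ => Subalgebra.smul_mem _ (mem_pinchingAlgebra _ _ c) _
  rw [← hadd, ← hcard]
  exact qRelEnt_sub_logb_card_le_of_isRestrictedDensity
    (completeOrthogonalIdempotents_occupationProj he l) (isHermitian_occupationProj heh l)
    (isDensity_piTensor fun _ => hρ) (isHermitian_piTensor fun _ => hσ.isHermitian) hσ_mem hψ hφ

/-- Hiai–Petz lower bound: the relative entropy of the restrictions of `ρ^{⊗l}`, `σ^{⊗l}`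
to the abelian algebra `D_{l,ρ}` (expressed via the densities `Dψ, Dφ ∈ D_{l,ρ}` of the
restricted states) is at least `l·S(ρ,σ) − d·log(l+1)`. -/
theorem restricted_rel_entropy_lower_bound (d : ℕ) (ρ σ : Matrix (Fin d) (Fin d) ℂ)
    (hρ : IsDensity ρ) (hσ : IsDensity σ) (hsupp : SuppLe ρ σ)
    (e : Fin d → Matrix (Fin d) (Fin d) ℂ) (lam : Fin d → ℝ)
    (he : ∀ i, IsProjn (e i)) (horth : ∀ i j, i ≠ j → e i * e j = 0)
    (hsum : ∑ i, e i = 1) (hspec : σ = ∑ i, (lam i : ℂ) • e i) (l : ℕ)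
    (Dψ Dφ : Matrix (Fin l → Fin d) (Fin l → Fin d) ℂ)
    (hDψmem : Dψ ∈ pinchAlg e ρ l) (hDφmem : Dφ ∈ pinchAlg e ρ l)
    (hDψ : IsDensity Dψ) (hDφ : IsDensity Dφ)
    (hψ : ∀ b ∈ pinchAlg e ρ l, (Dψ * b).trace = (tpow ρ l * b).trace)
    (hφ : ∀ b ∈ pinchAlg e ρ l, (Dφ * b).trace = (tpow σ l * b).trace) :
    l * qRelEnt ρ σ - d * Real.logb 2 (l + 1) ≤ qRelEnt Dψ Dφ := by
  rw [pinchAlg_eq_pinchingAlgebra] at hDψmem hDφmem hψ hφ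
  simpa only [Fintype.card_fin] using restricted_rel_entropy_lower_bound_general hρ hσ.1 hsupp
    ⟨⟨fun i => (he i).2, horth⟩, hsum⟩ (fun i => (he i).1) hspec ⟨hDψmem, hψ⟩ ⟨hDφmem, hφ⟩
end

section
/- Let A be a finite-dimensional C*-algebra and B ⊆ A a subalgebra containing the identity. For states ψ, φ on A, the relative entropy satisfies S(ψ↾B, φ↾B) ≤ S(ψ, φ) (monotonicity of relative entropy under restriction to a subalgebra). -/
open Filter
open scoped ComplexOrder Classical

/-! For positive `ρ, σ` and `t > 0`, the concave functional
`X ↦ 2 Re tr ρX - tr σXX* - t tr ρX*X` is maximal at the solution of `σX + t Xρ = ρ`. If `ρ, σ`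
belong to a subalgebra then so does this solution, hence the maximum cannot increase when the states
are restricted. In terms of the Nussbaum–Szkoła distributions `p, q` of `ρ, σ` the maximum is
`∑ p² / (q + t p)`, the `t`-derivative of `∑ p (log (q + t p) - log q)`; the latter vanishes at
`t = 0` and, after subtracting `(∑ p) log t`, tends to the relative entropy as `t → ∞`. -/

section ClassicalRelativeEntropy

variable {ι κ : Type*} {s : Finset ι} {u : Finset κ} {p q : ι → ℝ} {p' q' : κ → ℝ}

/-- The finite positive measures with weights `p`, `q` on `s` satisfy `p ≪ q`. -/
structure IsDominated (s : Finset ι) (p q : ι → ℝ) : Prop where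
  nonneg_left : ∀ i ∈ s, 0 ≤ p i
  nonneg_right : ∀ i ∈ s, 0 ≤ q i
  eq_zero : ∀ i ∈ s, q i = 0 → p i = 0

/-- The classical relative entropy (Kullback–Leibler divergence, natural logarithm) of the weights
`p`, `q` on `s`, meaningful when `IsDominated s p q`. -/
noncomputable def classicalRelEnt (s : Finset ι) (p q : ι → ℝ) : ℝ :=
  ∑ i ∈ s, p i * (Real.log (p i) - Real.log (q i))

/-- The `f`-divergence `∑ p² / (q + t p)`, out of which the relative entropy is obtained by
integration over `t`. Terms with `p i = q i = 0` vanish because `0 / 0 = 0`. -/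
noncomputable def resolventDiv (s : Finset ι) (p q : ι → ℝ) (t : ℝ) : ℝ :=
  ∑ i ∈ s, p i ^ 2 / (q i + t * p i)

/-- The primitive of `resolventDiv s p q` vanishing at `0`. -/
noncomputable def resolventPrimitive (s : Finset ι) (p q : ι → ℝ) (t : ℝ) : ℝ :=
  ∑ i ∈ s, p i * (Real.log (q i + t * p i) - Real.log (q i))

theorem resolventPrimitive_zero (s : Finset ι) (p q : ι → ℝ) : resolventPrimitive s p q 0 = 0 := by
  simp [resolventPrimitive]

theorem IsDominated.hasDerivAt_resolventPrimitive (h : IsDominated s p q) {t : ℝ} (ht : 0 ≤ t) :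
    HasDerivAt (resolventPrimitive s p q) (resolventDiv s p q t) t := by
  refine HasDerivAt.fun_sum fun i hi => ?_
  rcases (h.nonneg_left i hi).eq_or_lt with hp | hp
  · simpa [← hp] using hasDerivAt_const t (0 : ℝ)
  · have hq : 0 < q i := (h.nonneg_right i hi).lt_of_ne' fun hq => hp.ne' (h.eq_zero i hi hq)
    have hlog := (((hasDerivAt_mul_const (p i)).const_add (q i)).log
      (show q i + t * p i ≠ 0 by positivity)).sub_const (Real.log (q i))
    exact (hlog.const_mul (p i)).congr_deriv (by ring)

theorem tendsto_mul_log_add_mul_sub {a b : ℝ} (ha : 0 ≤ a) (hb : 0 ≤ b) :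
    Tendsto (fun t => a * (Real.log (b + t * a) - Real.log t)) atTop (nhds (a * Real.log a)) := by
  rcases ha.eq_or_lt with rfl | ha
  · simp
  have hlim : Tendsto (fun t : ℝ => b / t + a) atTop (nhds a) := by
    simpa using (tendsto_const_nhds.div_atTop tendsto_id).add_const a
  refine ((hlim.log ha.ne').congr' ?_).const_mul a
  filter_upwards [eventually_gt_atTop 0] with t ht
  rw [← Real.log_div (by positivity) ht.ne', add_div, mul_div_cancel_left₀ _ ht.ne']

theorem IsDominated.tendsto_resolventPrimitive (h : IsDominated s p q) :
    Tendsto (fun t => resolventPrimitive s p q t - (∑ i ∈ s, p i) * Real.log t) atTop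
      (nhds (classicalRelEnt s p q)) := by
  have hterm (i) (hi : i ∈ s) := (tendsto_mul_log_add_mul_sub (h.nonneg_left i hi)
    (h.nonneg_right i hi)).sub_const (p i * Real.log (q i))
  convert tendsto_finsetSum s hterm using 2
  · rw [resolventPrimitive, Finset.sum_mul, ← Finset.sum_sub_distrib]
    exact Finset.sum_congr rfl fun i _ => by ring
  · exact Finset.sum_congr rfl fun i _ => by ring

theorem classicalRelEnt_le_of_resolventDiv_le (h : IsDominated s p q) (h' : IsDominated u p' q')
    (hsum : ∑ i ∈ s, p i = ∑ i ∈ u, p' i)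
    (hle : ∀ t, 0 < t → resolventDiv s p q t ≤ resolventDiv u p' q' t) :
    classicalRelEnt s p q ≤ classicalRelEnt u p' q' := by
  have hderiv {t : ℝ} (ht : 0 ≤ t) :=
    (h'.hasDerivAt_resolventPrimitive ht).sub (h.hasDerivAt_resolventPrimitive ht)
  have hmono : MonotoneOn (resolventPrimitive u p' q' - resolventPrimitive s p q) (Set.Ici 0) :=
    monotoneOn_of_hasDerivWithinAt_nonneg (convex_Ici 0)
      (fun t ht => (hderiv ht).continuousAt.continuousWithinAt)
      (fun t ht => (hderiv (interior_subset ht)).hasDerivWithinAt)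
      (fun t ht => sub_nonneg.mpr (hle t (by simpa using ht)))
  refine le_of_tendsto_of_tendsto h.tendsto_resolventPrimitive h'.tendsto_resolventPrimitive ?_
  filter_upwards [eventually_ge_atTop 0] with t ht
  have hnonneg := hmono Set.self_mem_Ici ht ht
  simp only [Pi.sub_apply, resolventPrimitive_zero, sub_self, sub_nonneg] at hnonneg
  rw [hsum]
  gcongr

end ClassicalRelativeEntropy

section TraceInequalities

open Matrix

variable {𝕜 n : Type*} [RCLike 𝕜] [Fintype n] {A : Matrix n n 𝕜}

theorem re_trace_mul_conjTranspose_of_isHermitian (hA : A.IsHermitian) (M : Matrix n n 𝕜) :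
    RCLike.re (A * Mᴴ).trace = RCLike.re (A * M).trace := by
  rw [trace_mul_comm A M, ← RCLike.conj_re (M * A).trace, ← RCLike.star_def, ← trace_conjTranspose,
    conjTranspose_mul, hA.eq]

theorem trace_mul_mul_conjTranspose_nonneg (hA : A.PosSemidef) (M : Matrix n n 𝕜) :
    0 ≤ (A * (M * Mᴴ)).trace := by
  rw [← Matrix.mul_assoc, trace_mul_comm, ← Matrix.mul_assoc]
  exact (hA.conjTranspose_mul_mul_same M).trace_nonneg

theorem trace_mul_conjTranspose_mul_nonneg (hA : A.PosSemidef) (M : Matrix n n 𝕜) :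
    0 ≤ (A * (Mᴴ * M)).trace := by
  simpa using trace_mul_mul_conjTranspose_nonneg hA Mᴴ

open scoped MatrixOrder in
theorem exists_eq_conjTranspose_mul_self_of_posSemidef (hA : A.PosSemidef) :
    ∃ C : Matrix n n 𝕜, A = Cᴴ * C :=
  CStarAlgebra.nonneg_iff_eq_star_mul_self.mp hA.nonneg

theorem trace_mul_nonneg_of_posSemidef {C : Matrix n n 𝕜} (hA : A.PosSemidef)
    (hC : C.PosSemidef) : 0 ≤ (A * C).trace := by
  obtain ⟨M, rfl⟩ := exists_eq_conjTranspose_mul_self_of_posSemidef hC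
  exact trace_mul_conjTranspose_mul_nonneg hA M

theorem mul_eq_zero_of_trace_mul_eq_zero {C : Matrix n n 𝕜} (hA : A.PosSemidef)
    (hC : C.PosSemidef) (h : (A * C).trace = 0) : A * C = 0 := by
  obtain ⟨M, rfl⟩ := exists_eq_conjTranspose_mul_self_of_posSemidef hA
  obtain ⟨N, rfl⟩ := exists_eq_conjTranspose_mul_self_of_posSemidef hC
  have hMN : M * Nᴴ = 0 := by
    rw [← trace_conjTranspose_mul_self_eq_zero_iff, ← h]
    simp only [conjTranspose_mul, conjTranspose_conjTranspose, Matrix.mul_assoc]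
    rw [trace_mul_comm N]
    simp only [Matrix.mul_assoc]
  rw [Matrix.mul_assoc, ← Matrix.mul_assoc M, hMN, Matrix.zero_mul, Matrix.mul_zero]

end TraceInequalities

section SpectralProjections

open Matrix

variable {𝕜 n : Type*} [RCLike 𝕜] [Fintype n] [DecidableEq n] {A : Matrix n n 𝕜}

theorem continuousOn_spectrum (f : ℝ → ℝ) (A : Matrix n n 𝕜) : ContinuousOn f (spectrum ℝ A) :=
  A.finite_real_spectrum.continuousOn f

/-- The real spectrum of a matrix, as a finite set to sum over. -/
noncomputable def realSpectrum (A : Matrix n n 𝕜) : Finset ℝ := A.finite_real_spectrum.toFinset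

/-- The spectral projection of a Hermitian matrix at `x`; it is `0` off the spectrum. -/
noncomputable def spectralProj (A : Matrix n n 𝕜) (x : ℝ) : Matrix n n 𝕜 := cfc (Pi.single x 1) A

theorem mem_realSpectrum {x : ℝ} : x ∈ realSpectrum A ↔ x ∈ spectrum ℝ A :=
  A.finite_real_spectrum.mem_toFinset

open scoped MatrixOrder in
theorem nonneg_of_mem_realSpectrum (hA : A.PosSemidef) {x : ℝ} (hx : x ∈ realSpectrum A) : 0 ≤ x :=
  spectrum_nonneg_of_nonneg hA.nonneg (mem_realSpectrum.mp hx)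

open scoped MatrixOrder in
theorem posSemidef_spectralProj (A : Matrix n n 𝕜) (x : ℝ) : (spectralProj A x).PosSemidef :=
  nonneg_iff_posSemidef.mp <| cfc_nonneg fun y _ => by
    simp only [Pi.single_apply]
    positivity

theorem cfc_eq_sum_smul_spectralProj (f : ℝ → ℝ) (A : Matrix n n 𝕜) :
    cfc f A = ∑ x ∈ realSpectrum A, f x • spectralProj A x := by
  have hcont (g : ℝ → ℝ) := continuousOn_spectrum g A
  simp only [spectralProj, ← cfc_smul _ _ A (hcont _)]
  rw [← cfc_sum _ A _ fun _ _ => hcont _]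
  refine cfc_congr fun x hx => ?_
  simp [Finset.sum_apply, Pi.single_apply, mem_realSpectrum.mpr hx]

theorem sum_spectralProj (hA : A.IsHermitian) : ∑ x ∈ realSpectrum A, spectralProj A x = 1 := by
  simpa [cfc_const_one ℝ A hA.isSelfAdjoint] using
    (cfc_eq_sum_smul_spectralProj (fun _ => 1) A).symm

theorem sum_smul_spectralProj (hA : A.IsHermitian) :
    ∑ x ∈ realSpectrum A, x • spectralProj A x = A := by
  simpa [cfc_id ℝ A hA.isSelfAdjoint] using (cfc_eq_sum_smul_spectralProj id A).symm

theorem mul_cfc (hA : A.IsHermitian) (f : ℝ → ℝ) : A * cfc f A = cfc (fun x => x * f x) A := by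
  rw [cfc_mul (fun x => x) f A (continuousOn_spectrum _ A) (continuousOn_spectrum _ A),
    cfc_id' ℝ A hA.isSelfAdjoint]

theorem mul_spectralProj (hA : A.IsHermitian) (x : ℝ) :
    A * spectralProj A x = x • spectralProj A x := by
  rw [spectralProj, mul_cfc hA, ← cfc_smul x _ A (continuousOn_spectrum _ A)]
  congr 1 with y
  by_cases hy : y = x <;> simp [hy]

theorem spectralProj_mul (hA : A.IsHermitian) (x : ℝ) :
    spectralProj A x * A = x • spectralProj A x := by
  have h := congrArg conjTranspose (mul_spectralProj hA x)
  simpa [(posSemidef_spectralProj A x).isHermitian.eq, hA.eq] using h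

theorem spectralProj_zero_mulVec (hA : A.IsHermitian) {v : n → 𝕜} (hv : A *ᵥ v = 0) :
    spectralProj A 0 *ᵥ v = v := by
  have hcont (g : ℝ → ℝ) := continuousOn_spectrum g A
  have hinv : cfc (fun x : ℝ => x⁻¹) A * A + spectralProj A 0 = 1 := by
    nth_rw 2 [← cfc_id' ℝ A hA.isSelfAdjoint]
    rw [spectralProj, ← cfc_mul _ _ A (hcont _) (hcont _), ← cfc_add A _ _ (hcont _) (hcont _),
      ← cfc_const_one ℝ A hA.isSelfAdjoint]
    congr 1 with x
    by_cases hx : x = 0 <;> simp [hx]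
  have hvec := congrArg (· *ᵥ v) hinv
  simpa [add_mulVec, ← mulVec_mulVec, hv] using hvec

theorem cfc_mem_starSubalgebra {B : StarSubalgebra ℝ (Matrix n n 𝕜)} (hA : A ∈ B) (f : ℝ → ℝ) :
    cfc f A ∈ B :=
  have : IsClosed (B : Set (Matrix n n 𝕜)) := B.toSubmodule.closed_of_finiteDimensional
  cfc_mem (𝕜' := ℝ) f hA

end SpectralProjections

section SpectralDistributions

open Matrix

variable {n : Type*} [Fintype n] [DecidableEq n] {ρ σ : Matrix n n ℂ}

/-- The pairs (point of the spectrum of `ρ`, point of the spectrum of `σ`). -/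
noncomputable def spectralPairs (ρ σ : Matrix n n ℂ) : Finset (ℝ × ℝ) :=
  realSpectrum ρ ×ˢ realSpectrum σ

/-- The trace of the product of the spectral projections of `ρ` at `x.1` and of `σ` at `x.2`. -/
noncomputable def spectralOverlap (ρ σ : Matrix n n ℂ) (x : ℝ × ℝ) : ℝ :=
  (spectralProj ρ x.1 * spectralProj σ x.2).trace.re

/-- The first Nussbaum–Szkoła distribution of `ρ` and `σ`, on `spectralPairs ρ σ`. -/
noncomputable def nussbaumSzkolaFst (ρ σ : Matrix n n ℂ) (x : ℝ × ℝ) : ℝ :=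
  x.1 * spectralOverlap ρ σ x

/-- The second Nussbaum–Szkoła distribution of `ρ` and `σ`, on `spectralPairs ρ σ`. -/
noncomputable def nussbaumSzkolaSnd (ρ σ : Matrix n n ℂ) (x : ℝ × ℝ) : ℝ :=
  x.2 * spectralOverlap ρ σ x

theorem spectralOverlap_nonneg (ρ σ : Matrix n n ℂ) (x : ℝ × ℝ) : 0 ≤ spectralOverlap ρ σ x :=
  (RCLike.nonneg_iff.mp <| trace_mul_nonneg_of_posSemidef (posSemidef_spectralProj ρ x.1)
    (posSemidef_spectralProj σ x.2)).1

theorem re_trace_cfc_mul_cfc (f g : ℝ → ℝ) (ρ σ : Matrix n n ℂ) :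
    (cfc f ρ * cfc g σ).trace.re =
      ∑ x ∈ spectralPairs ρ σ, f x.1 * g x.2 * spectralOverlap ρ σ x := by
  rw [cfc_eq_sum_smul_spectralProj f, cfc_eq_sum_smul_spectralProj g, Finset.sum_mul_sum,
    ← Finset.sum_product', trace_sum, Complex.re_sum]
  refine Finset.sum_congr rfl fun x _ => ?_
  rw [smul_mul_smul_comm, trace_smul, Complex.smul_re, smul_eq_mul, spectralOverlap]

theorem sum_nussbaumSzkolaFst (hρ : ρ.IsHermitian) (hσ : σ.IsHermitian) :
    ∑ x ∈ spectralPairs ρ σ, nussbaumSzkolaFst ρ σ x = ρ.trace.re := by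
  simpa [cfc_id' ℝ ρ hρ.isSelfAdjoint, cfc_const_one ℝ σ hσ.isSelfAdjoint, nussbaumSzkolaFst]
    using (re_trace_cfc_mul_cfc (fun x => x) (fun _ => 1) ρ σ).symm

theorem suppLe_iff_mul_spectralProj_zero (hσ : σ.IsHermitian) :
    SuppLe ρ σ ↔ ρ * spectralProj σ 0 = 0 := by
  refine ⟨fun h => ?_, fun h v hv => ?_⟩
  · refine ext_of_mulVec_single fun i => ?_
    rw [← mulVec_mulVec, zero_mulVec]
    refine h _ ?_
    rw [mulVec_mulVec, mul_spectralProj hσ, zero_smul, zero_mulVec]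
  · rw [← spectralProj_zero_mulVec hσ hv, mulVec_mulVec, h, zero_mulVec]

theorem SuppLe.nussbaumSzkolaFst_eq_zero (h : SuppLe ρ σ) (hρ : ρ.IsHermitian)
    (hσ : σ.IsHermitian) (a : ℝ) : nussbaumSzkolaFst ρ σ (a, 0) = 0 := by
  have hzero : a • (spectralProj ρ a * spectralProj σ 0) = 0 := by
    rw [← smul_mul_assoc, ← spectralProj_mul hρ, Matrix.mul_assoc,
      (suppLe_iff_mul_spectralProj_zero hσ).mp h, Matrix.mul_zero]
  simpa [nussbaumSzkolaFst, spectralOverlap] using congrArg (fun M => M.trace.re) hzero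

theorem SuppLe.isDominated_nussbaumSzkola (h : SuppLe ρ σ) (hρ : ρ.PosSemidef)
    (hσ : σ.PosSemidef) :
    IsDominated (spectralPairs ρ σ) (nussbaumSzkolaFst ρ σ) (nussbaumSzkolaSnd ρ σ) where
  nonneg_left x hx := mul_nonneg (nonneg_of_mem_realSpectrum hρ (Finset.mem_product.mp hx).1)
    (spectralOverlap_nonneg ρ σ x)
  nonneg_right x hx := mul_nonneg (nonneg_of_mem_realSpectrum hσ (Finset.mem_product.mp hx).2)
    (spectralOverlap_nonneg ρ σ x)
  eq_zero := by
    rintro ⟨a, b⟩ - hb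
    rcases mul_eq_zero.mp hb with rfl | hw
    · exact h.nussbaumSzkolaFst_eq_zero hρ.isHermitian hσ.isHermitian a
    · simp only [nussbaumSzkolaFst, hw, mul_zero]

theorem matLog2_eq_cfc_s15 (hρ : ρ.IsHermitian) : matLog2 ρ = cfc (Real.logb 2) ρ := by
  rw [matLog2, dif_pos hρ, hρ.cfc_eq, IsHermitian.cfc, Unitary.conjStarAlgAut_apply]
  rfl

theorem qRelEnt_eq_sum (hρ : ρ.IsHermitian) (hσ : σ.IsHermitian) :
    qRelEnt ρ σ = ∑ x ∈ spectralPairs ρ σ,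
      nussbaumSzkolaFst ρ σ x * (Real.logb 2 x.1 - Real.logb 2 x.2) := by
  have hlogρ : (ρ * matLog2 ρ).trace.re =
      ∑ x ∈ spectralPairs ρ σ, x.1 * Real.logb 2 x.1 * spectralOverlap ρ σ x := by
    simpa [matLog2_eq_cfc_s15 hρ, mul_cfc hρ, cfc_const_one ℝ σ hσ.isSelfAdjoint] using
      re_trace_cfc_mul_cfc (fun x => x * Real.logb 2 x) (fun _ => 1) ρ σ
  have hlogσ : (ρ * matLog2 σ).trace.re =
      ∑ x ∈ spectralPairs ρ σ, x.1 * Real.logb 2 x.2 * spectralOverlap ρ σ x := by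
    simpa [matLog2_eq_cfc_s15 hσ, cfc_id' ℝ ρ hρ.isSelfAdjoint] using
      re_trace_cfc_mul_cfc (fun x => x) (Real.logb 2) ρ σ
  rw [qRelEnt, Matrix.mul_sub, trace_sub, Complex.sub_re, hlogρ, hlogσ, ← Finset.sum_sub_distrib]
  exact Finset.sum_congr rfl fun x _ => by rw [nussbaumSzkolaFst]; ring

theorem SuppLe.qRelEnt_mul_log_two (h : SuppLe ρ σ) (hρ : ρ.IsHermitian) (hσ : σ.IsHermitian) :
    qRelEnt ρ σ * Real.log 2 = classicalRelEnt (spectralPairs ρ σ) (nussbaumSzkolaFst ρ σ)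
      (nussbaumSzkolaSnd ρ σ) := by
  rw [qRelEnt_eq_sum hρ hσ, Finset.sum_mul]
  refine Finset.sum_congr rfl fun x _ => ?_
  rcases eq_or_ne (nussbaumSzkolaFst ρ σ x) 0 with hp | hp
  · simp [hp]
  obtain ⟨a, b⟩ := x
  have hb : b ≠ 0 := by
    rintro rfl
    exact hp (h.nussbaumSzkolaFst_eq_zero hρ hσ a)
  obtain ⟨ha, hw⟩ := mul_ne_zero_iff.mp hp
  rw [nussbaumSzkolaSnd, nussbaumSzkolaFst, Real.log_mul ha hw, Real.log_mul hb hw, mul_assoc,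
    sub_mul, Real.logb, Real.logb, div_mul_cancel₀ _ (Real.log_pos one_lt_two).ne',
    div_mul_cancel₀ _ (Real.log_pos one_lt_two).ne']
  ring

end SpectralDistributions

section Kosaki

open Matrix

variable {n : Type*} [Fintype n] {ρ σ : Matrix n n ℂ} {t : ℝ}

/-- Kosaki's functional: its supremum over `X` is the quadratic form, at the vector `ρ ^ (1 / 2)`,
of the resolvent of the relative modular operator of `ρ` and `σ`. -/
noncomputable def kosakiForm (ρ σ : Matrix n n ℂ) (t : ℝ) (X : Matrix n n ℂ) : ℝ :=
  2 * (ρ * X).trace.re - (σ * (X * Xᴴ)).trace.re - t * (ρ * (Xᴴ * X)).trace.re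

theorem kosakiForm_eq_sub_of_critical (hρ : ρ.IsHermitian) (hσ : σ.IsHermitian)
    {X : Matrix n n ℂ} (hX : σ * X + t • (X * ρ) = ρ) (Y : Matrix n n ℂ) :
    kosakiForm ρ σ t Y = (ρ * X).trace.re - (σ * ((Y - X) * (Y - X)ᴴ)).trace.re -
      t * (ρ * ((Y - X)ᴴ * (Y - X))).trace.re := by
  have htest (Z : Matrix n n ℂ) :
      (σ * (X * Zᴴ)).trace.re + t * (ρ * (Zᴴ * X)).trace.re = (ρ * Z).trace.re := by
    have hZ : (ρ * Zᴴ).trace.re = (ρ * Z).trace.re := re_trace_mul_conjTranspose_of_isHermitian hρ Z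
    calc _ = ((σ * X + t • (X * ρ)) * Zᴴ).trace.re := by
          rw [← Matrix.mul_assoc ρ, trace_mul_cycle]
          simp [Matrix.add_mul, Matrix.mul_assoc]
      _ = (ρ * Z).trace.re := by rw [hX, hZ]
  have hσcross : (σ * (Y * Xᴴ)).trace.re = (σ * (X * Yᴴ)).trace.re := by
    simpa using re_trace_mul_conjTranspose_of_isHermitian hσ (X * Yᴴ)
  have hρcross : (ρ * (Xᴴ * Y)).trace.re = (ρ * (Yᴴ * X)).trace.re := by
    simpa using re_trace_mul_conjTranspose_of_isHermitian hρ (Yᴴ * X)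
  simp only [kosakiForm, conjTranspose_sub, Matrix.mul_sub, Matrix.sub_mul, trace_sub,
    Complex.sub_re, hσcross, hρcross]
  linear_combination htest X - 2 * htest Y

theorem kosakiForm_eq_of_critical (hρ : ρ.IsHermitian) (hσ : σ.IsHermitian) {X : Matrix n n ℂ}
    (hX : σ * X + t • (X * ρ) = ρ) : kosakiForm ρ σ t X = (ρ * X).trace.re := by
  simp [kosakiForm_eq_sub_of_critical hρ hσ hX]

theorem kosakiForm_le_of_critical (hρ : ρ.PosSemidef) (hσ : σ.PosSemidef) (ht : 0 ≤ t)
    {X : Matrix n n ℂ} (hX : σ * X + t • (X * ρ) = ρ) (Y : Matrix n n ℂ) :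
    kosakiForm ρ σ t Y ≤ (ρ * X).trace.re := by
  rw [kosakiForm_eq_sub_of_critical hρ.isHermitian hσ.isHermitian hX]
  have hσY := (RCLike.nonneg_iff.mp (trace_mul_mul_conjTranspose_nonneg hσ (Y - X))).1
  have hρY := (RCLike.nonneg_iff.mp (trace_mul_conjTranspose_mul_nonneg hρ (Y - X))).1
  rw [RCLike.re_to_complex] at hσY hρY
  linarith [mul_nonneg ht hρY]

variable [DecidableEq n]

/-- The maximizer of `kosakiForm ρ σ t`, i.e. the solution of `σ X + t X ρ = ρ`. -/
noncomputable def kosakiMaximizer (ρ σ : Matrix n n ℂ) (t : ℝ) : Matrix n n ℂ :=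
  ∑ x ∈ spectralPairs ρ σ, (x.1 / (x.2 + t * x.1)) • (spectralProj σ x.2 * spectralProj ρ x.1)

theorem kosakiMaximizer_mem {B : StarSubalgebra ℝ (Matrix n n ℂ)} (hρ : ρ ∈ B) (hσ : σ ∈ B)
    (t : ℝ) : kosakiMaximizer ρ σ t ∈ B :=
  sum_mem fun _ _ => SMulMemClass.smul_mem _ <|
    mul_mem (cfc_mem_starSubalgebra hσ _) (cfc_mem_starSubalgebra hρ _)

theorem kosakiMaximizer_critical (hρ : ρ.PosSemidef) (hσ : σ.PosSemidef) (ht : 0 < t) :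
    σ * kosakiMaximizer ρ σ t + t • (kosakiMaximizer ρ σ t * ρ) = ρ := by
  have hterm : ∀ x ∈ spectralPairs ρ σ,
      (x.1 / (x.2 + t * x.1)) • (σ * (spectralProj σ x.2 * spectralProj ρ x.1)) +
        t • ((x.1 / (x.2 + t * x.1)) • (spectralProj σ x.2 * spectralProj ρ x.1) * ρ) =
      x.1 • (spectralProj σ x.2 * spectralProj ρ x.1) := by
    rintro ⟨a, b⟩ hx
    have ha : 0 ≤ a := nonneg_of_mem_realSpectrum hρ (Finset.mem_product.mp hx).1
    have hb : 0 ≤ b := nonneg_of_mem_realSpectrum hσ (Finset.mem_product.mp hx).2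
    have hcoef : a / (b + t * a) * b + t * (a / (b + t * a)) * a = a := by
      rcases ha.eq_or_lt with rfl | ha
      · simp
      · field_simp
    dsimp only
    rw [smul_mul_assoc, Matrix.mul_assoc, spectralProj_mul hρ.isHermitian, ← Matrix.mul_assoc,
      mul_spectralProj hσ.isHermitian, smul_mul_assoc, mul_smul_comm, smul_smul, smul_smul,
      smul_smul, ← add_smul, hcoef]
  rw [kosakiMaximizer, Finset.mul_sum, Finset.sum_mul, Finset.smul_sum, ← Finset.sum_add_distrib]
  simp only [mul_smul_comm]
  rw [Finset.sum_congr rfl hterm, spectralPairs, Finset.sum_product]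
  simp only [← mul_smul_comm, ← Finset.sum_mul, sum_spectralProj hσ.isHermitian, one_mul]
  exact sum_smul_spectralProj hρ.isHermitian

theorem re_trace_mul_kosakiMaximizer (hρ : ρ.IsHermitian) (σ : Matrix n n ℂ) (t : ℝ) :
    (ρ * kosakiMaximizer ρ σ t).trace.re =
      resolventDiv (spectralPairs ρ σ) (nussbaumSzkolaFst ρ σ) (nussbaumSzkolaSnd ρ σ) t := by
  rw [kosakiMaximizer, Finset.mul_sum, trace_sum, Complex.re_sum]
  refine Finset.sum_congr rfl fun x _ => ?_
  have htrace : (ρ * (spectralProj σ x.2 * spectralProj ρ x.1)).trace.re =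
      nussbaumSzkolaFst ρ σ x := by
    rw [trace_mul_comm, Matrix.mul_assoc, spectralProj_mul hρ, mul_smul_comm, trace_smul,
      trace_mul_comm, Complex.smul_re, smul_eq_mul, nussbaumSzkolaFst, spectralOverlap]
  rw [mul_smul_comm, trace_smul, Complex.smul_re, smul_eq_mul, htrace]
  simp only [nussbaumSzkolaFst, nussbaumSzkolaSnd]
  rcases eq_or_ne (spectralOverlap ρ σ x) 0 with hw | hw
  · simp [hw]
  · rw [div_mul_eq_mul_div, ← mul_div_mul_right _ _ hw]
    congr 1 <;> ring

end Kosaki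

section Restriction

open Matrix

variable {n : Type*} [Fintype n] [DecidableEq n] {B : StarSubalgebra ℝ (Matrix n n ℂ)}
  {ρ σ ρ₀ ρ₁ σ₀ : Matrix n n ℂ}

/-- `ρ₀` is the density, with respect to the ambient trace, of the restriction to `B` of the
functional with density `ρ`. -/
structure IsRestriction (B : StarSubalgebra ℝ (Matrix n n ℂ)) (ρ₀ ρ : Matrix n n ℂ) : Prop where
  mem : ρ₀ ∈ B
  trace_mul : ∀ b ∈ B, (ρ₀ * b).trace = (ρ * b).trace

namespace IsRestriction

theorem conjTranspose (h : IsRestriction B ρ₀ ρ) : IsRestriction B ρ₀ᴴ ρᴴ where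
  mem := star_mem h.mem
  trace_mul b hb := by
    have hstar := congrArg star (h.trace_mul bᴴ (star_mem hb))
    rwa [← trace_conjTranspose, ← trace_conjTranspose, conjTranspose_mul, conjTranspose_mul,
      conjTranspose_conjTranspose, trace_mul_comm, trace_mul_comm b] at hstar

theorem unique (h₀ : IsRestriction B ρ₀ ρ) (h₁ : IsRestriction B ρ₁ ρ) : ρ₀ = ρ₁ := by
  have hmem : (ρ₀ - ρ₁)ᴴ ∈ B := star_mem (sub_mem h₀.mem h₁.mem)
  rw [← sub_eq_zero, ← trace_mul_conjTranspose_self_eq_zero_iff, Matrix.sub_mul, trace_sub,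
    h₀.trace_mul _ hmem, h₁.trace_mul _ hmem, sub_self]

theorem trace_eq (h : IsRestriction B ρ₀ ρ) : ρ₀.trace = ρ.trace := by
  simpa using h.trace_mul 1 (one_mem B)

theorem isHermitian (h : IsRestriction B ρ₀ ρ) (hρ : ρ.IsHermitian) : ρ₀.IsHermitian :=
  (hρ.eq ▸ h.conjTranspose).unique h

theorem posSemidef (h : IsRestriction B ρ₀ ρ) (hρ : ρ.PosSemidef) : ρ₀.PosSemidef := by
  have hρ₀ := h.isHermitian hρ.isHermitian
  rw [← sum_smul_spectralProj hρ₀]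
  refine posSemidef_sum _ fun x _ => ?_
  have hP := posSemidef_spectralProj ρ₀ x
  rcases le_or_gt 0 x with hx | hx
  · exact hP.smul hx
  have htrace : 0 ≤ x • (spectralProj ρ₀ x).trace := by
    have hPB : spectralProj ρ₀ x ∈ B := cfc_mem_starSubalgebra h.mem _
    rw [← trace_smul, ← mul_spectralProj hρ₀, h.trace_mul _ hPB]
    exact trace_mul_nonneg_of_posSemidef hρ hP
  have hzero : (spectralProj ρ₀ x).trace = 0 :=
    (smul_eq_zero_iff_right hx.ne).mp <|
      (smul_nonpos_of_nonpos_of_nonneg hx.le hP.trace_nonneg).antisymm htrace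
  rw [hP.trace_eq_zero_iff.mp hzero, smul_zero]
  exact .zero

theorem suppLe (hρ₀ : IsRestriction B ρ₀ ρ) (hσ₀ : IsRestriction B σ₀ σ) (hρ : ρ.PosSemidef)
    (hσ : σ.PosSemidef) (h : SuppLe ρ σ) : SuppLe ρ₀ σ₀ := by
  have hσ₀H := hσ₀.isHermitian hσ.isHermitian
  have hP := posSemidef_spectralProj σ₀ 0
  have hPB : spectralProj σ₀ 0 ∈ B := cfc_mem_starSubalgebra hσ₀.mem _
  have hσP : σ * spectralProj σ₀ 0 = 0 := mul_eq_zero_of_trace_mul_eq_zero hσ hP <| by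
    rw [← hσ₀.trace_mul _ hPB, mul_spectralProj hσ₀H, zero_smul, trace_zero]
  have hρP : ρ * spectralProj σ₀ 0 = 0 := by
    refine ext_of_mulVec_single fun i => ?_
    rw [← mulVec_mulVec, zero_mulVec]
    exact h _ (by rw [mulVec_mulVec, hσP, zero_mulVec])
  rw [suppLe_iff_mul_spectralProj_zero hσ₀H]
  refine mul_eq_zero_of_trace_mul_eq_zero (hρ₀.posSemidef hρ) hP ?_
  rw [hρ₀.trace_mul _ hPB, hρP, trace_zero]

theorem kosakiForm_eq (hρ₀ : IsRestriction B ρ₀ ρ) (hσ₀ : IsRestriction B σ₀ σ) (t : ℝ)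
    {X : Matrix n n ℂ} (hX : X ∈ B) : kosakiForm ρ₀ σ₀ t X = kosakiForm ρ σ t X := by
  have hX' : Xᴴ ∈ B := star_mem hX
  rw [kosakiForm, kosakiForm, hρ₀.trace_mul X hX, hρ₀.trace_mul _ (mul_mem hX' hX),
    hσ₀.trace_mul _ (mul_mem hX hX')]

theorem resolventDiv_le (hρ₀ : IsRestriction B ρ₀ ρ) (hσ₀ : IsRestriction B σ₀ σ)
    (hρ : ρ.PosSemidef) (hσ : σ.PosSemidef) {t : ℝ} (ht : 0 < t) :
    resolventDiv (spectralPairs ρ₀ σ₀) (nussbaumSzkolaFst ρ₀ σ₀) (nussbaumSzkolaSnd ρ₀ σ₀) t ≤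
      resolventDiv (spectralPairs ρ σ) (nussbaumSzkolaFst ρ σ) (nussbaumSzkolaSnd ρ σ) t := by
  have hρ₀P := hρ₀.posSemidef hρ
  have hσ₀P := hσ₀.posSemidef hσ
  calc _ = (ρ₀ * kosakiMaximizer ρ₀ σ₀ t).trace.re :=
        (re_trace_mul_kosakiMaximizer hρ₀P.isHermitian σ₀ t).symm
    _ = kosakiForm ρ₀ σ₀ t (kosakiMaximizer ρ₀ σ₀ t) :=
        (kosakiForm_eq_of_critical hρ₀P.isHermitian hσ₀P.isHermitian
          (kosakiMaximizer_critical hρ₀P hσ₀P ht)).symm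
    _ = kosakiForm ρ σ t (kosakiMaximizer ρ₀ σ₀ t) :=
        hρ₀.kosakiForm_eq hσ₀ t (kosakiMaximizer_mem hρ₀.mem hσ₀.mem t)
    _ ≤ (ρ * kosakiMaximizer ρ σ t).trace.re :=
        kosakiForm_le_of_critical hρ hσ ht.le (kosakiMaximizer_critical hρ hσ ht) _
    _ = _ := re_trace_mul_kosakiMaximizer hρ.isHermitian σ t

theorem qRelEnt_le (hρ₀ : IsRestriction B ρ₀ ρ) (hσ₀ : IsRestriction B σ₀ σ)
    (hρ : ρ.PosSemidef) (hσ : σ.PosSemidef) (h : SuppLe ρ σ) :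
    qRelEnt ρ₀ σ₀ ≤ qRelEnt ρ σ := by
  have hρ₀P := hρ₀.posSemidef hρ
  have hσ₀P := hσ₀.posSemidef hσ
  have h₀ := hρ₀.suppLe hσ₀ hρ hσ h
  refine le_of_mul_le_mul_right ?_ (Real.log_pos one_lt_two)
  rw [h₀.qRelEnt_mul_log_two hρ₀P.isHermitian hσ₀P.isHermitian,
    h.qRelEnt_mul_log_two hρ.isHermitian hσ.isHermitian]
  refine classicalRelEnt_le_of_resolventDiv_le (h₀.isDominated_nussbaumSzkola hρ₀P hσ₀P)
    (h.isDominated_nussbaumSzkola hρ hσ) ?_ fun t => hρ₀.resolventDiv_le hσ₀ hρ hσ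
  rw [sum_nussbaumSzkolaFst hρ₀P.isHermitian hσ₀P.isHermitian,
    sum_nussbaumSzkolaFst hρ.isHermitian hσ.isHermitian, hρ₀.trace_eq]

end IsRestriction

end Restriction

theorem rel_entropy_monotone_subalgebra_general {n : Type*} [Fintype n] [DecidableEq n]
    {B : StarSubalgebra ℝ (Matrix n n ℂ)} {ρ σ ρ₀ σ₀ : Matrix n n ℂ}
    (hρ : ρ.PosSemidef) (hσ : σ.PosSemidef)
    (hρ₀ : IsRestriction B ρ₀ ρ) (hσ₀ : IsRestriction B σ₀ σ) :
    qRelEntE ρ₀ σ₀ ≤ qRelEntE ρ σ := by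
  by_cases h : SuppLe ρ σ
  · rw [qRelEntE, qRelEntE, if_pos h, if_pos (hρ₀.suppLe hσ₀ hρ hσ h), EReal.coe_le_coe_iff]
    exact hρ₀.qRelEnt_le hσ₀ hρ hσ h
  · rw [qRelEntE, qRelEntE, if_neg h]
    exact le_top

/-- Monotonicity of the relative entropy under restriction to a unital *-subalgebra `B`
of a matrix algebra: `S(ψ↾B, φ↾B) ≤ S(ψ, φ)`, where the restricted states are represented
by their densities `DψB, DφB ∈ B` with respect to the ambient trace. -/
theorem rel_entropy_monotone_subalgebra (d : ℕ)
    (B : StarSubalgebra ℂ (Matrix (Fin d) (Fin d) ℂ))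
    (Dψ Dφ DψB DφB : Matrix (Fin d) (Fin d) ℂ)
    (hDψ : IsDensity Dψ) (hDφ : IsDensity Dφ)
    (hDψB : IsDensity DψB) (hDφB : IsDensity DφB)
    (hψmem : DψB ∈ B) (hφmem : DφB ∈ B)
    (hψ : ∀ b ∈ B, (DψB * b).trace = (Dψ * b).trace)
    (hφ : ∀ b ∈ B, (DφB * b).trace = (Dφ * b).trace) :
    qRelEntE DψB DφB ≤ qRelEntE Dψ Dφ :=
  rel_entropy_monotone_subalgebra_general
    (B := { B.toSubalgebra.restrictScalars ℝ with star_mem' := B.star_mem' })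
    hDψ.1 hDφ.1 ⟨hψmem, hψ⟩ ⟨hφmem, hφ⟩
end
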